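/- arXiv:2503.12397 — 2 statements merged into one kernel-verified Lean document; each statement's English description precedes it below -/
import Mathlib

section
/- There exists an absolute constant C > 0 such that for all integers n, m with 0 < m < n and every x ∈ [−1,1], ∫_{−1}^{1} |v_n^m(x,y)| w(y) dy ≤ (4/π²)·log((n+m−1)/(2m)) + C. -/
open Real MeasureTheory Finset

/-- Chebyshev nodes of the first kind: `x_k^n = cos((2k-1)π/(2n))`. -/
noncomputable def chebNode (n k : ℕ) : ℝ :=
  Real.cos ((2 * (k : ℝ) - 1) * Real.pi / (2 * (n : ℝ)))

/-- Orthonormal Chebyshev polynomials of the first kind. -/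
noncomputable def chebP (r : ℕ) (x : ℝ) : ℝ :=
  if r = 0 then Real.sqrt (1 / Real.pi)
  else Real.sqrt (2 / Real.pi) * Real.cos ((r : ℝ) * Real.arccos x)

/-- Darboux kernel `K_r(x,y) = Σ_{s=0}^r p_s(x) p_s(y)`. -/
noncomputable def darboux (r : ℕ) (x y : ℝ) : ℝ :=
  ∑ s ∈ Finset.range (r + 1), chebP s x * chebP s y

/-- de la Vallée Poussin kernel `v_n^m(x,y) = (1/(2m)) Σ_{r=n-m}^{n+m-1} K_r(x,y)`. -/
noncomputable def vpK (n m : ℕ) (x y : ℝ) : ℝ :=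
  (1 / (2 * (m : ℝ))) * ∑ r ∈ Finset.Icc (n - m) (n + m - 1), darboux r x y

/-- The Chebyshev weight `w(x) = 1/√(1-x²)`. -/
noncomputable def chebW (x : ℝ) : ℝ := 1 / Real.sqrt (1 - x ^ 2)

/-- Scaling functions `Φ_{n,k}^m(x) = (π/n) v_n^m(x_k^n, x)`. -/
noncomputable def scal (n m k : ℕ) (x : ℝ) : ℝ :=
  (Real.pi / (n : ℝ)) * vpK n m (chebNode n k) x

/-- The nodes `y_k^n`, `k = 1,…,2n`: the Chebyshev nodes of order `3n` not of order `n`. -/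
noncomputable def yNode (n k : ℕ) : ℝ := chebNode (3 * n) (3 * k / 2)

/-- Wavelet functions `ψ_{n,k}^m`. -/
noncomputable def wav (n m k : ℕ) (x : ℝ) : ℝ :=
  (Real.pi / (3 * (n : ℝ))) * vpK (3 * n) m (yNode n k) x -
    ∑ h ∈ Finset.Icc 1 n,
      scal n m h (yNode n k) * ((Real.pi / (3 * (n : ℝ))) * vpK (3 * n) m (chebNode n h) x)

/-- Filter coefficients `μ_{n,r}^m`. -/
noncomputable def muC (n m r : ℕ) : ℝ :=
  if r ≤ n - m then 1
  else if r < n + m then ((m : ℝ) + (n : ℝ) - (r : ℝ)) / (2 * (m : ℝ))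
  else 0

/-- Squared norms `ν_{n,r}^m` of the orthogonal scaling basis. -/
noncomputable def nuC (n m r : ℕ) : ℝ :=
  if r ≤ n - m then 1 else ((m : ℝ) ^ 2 + ((n : ℝ) - (r : ℝ)) ^ 2) / (2 * (m : ℝ) ^ 2)

/-- Orthogonal scaling basis `Φ_{n,r}^⊥`. -/
noncomputable def scalPerp (n m r : ℕ) (x : ℝ) : ℝ :=
  if r ≤ n - m then chebP r x
  else muC n m r * chebP r x - muC n m (2 * n - r) * chebP (2 * n - r) x

/-- The sup norm on `[-1,1]`. -/
noncomputable def supNorm (f : ℝ → ℝ) : ℝ := ⨆ x : Set.Icc (-1 : ℝ) 1, |f x|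

/-- The Lebesgue constant `c_∞ = max_{|x|≤1} ∫_{-1}^1 |v_n^m(x,y)| w(y) dy`. -/
noncomputable def cInf (n m : ℕ) : ℝ :=
  ⨆ x : Set.Icc (-1 : ℝ) 1, ∫ y in (-1 : ℝ)..1, |vpK n m x y| * chebW y


/-- Trigonometric Dirichlet kernel. -/
noncomputable def dirK (r : ℕ) (u : ℝ) : ℝ :=
  1 / 2 + ∑ s ∈ Finset.range r, Real.cos (((s : ℝ) + 1) * u)

/-- Trigonometric de la Vallée Poussin kernel. -/
noncomputable def trigV (n m : ℕ) (u : ℝ) : ℝ :=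
  (1 / (2 * (m : ℝ))) * ∑ r ∈ Finset.Icc (n - m) (n + m - 1), dirK r u

lemma trigV_continuous (n m : ℕ) : Continuous (trigV n m) := by
  unfold trigV dirK
  fun_prop

lemma dirK_neg (r : ℕ) (u : ℝ) : dirK r (-u) = dirK r u := by
  simp [dirK]

lemma dirK_periodic (r : ℕ) (u : ℝ) : dirK r (u + 2 * π) = dirK r u := by
  unfold dirK
  congr 1
  refine Finset.sum_congr rfl fun s _ => ?_
  have := Real.cos_add_nat_mul_two_pi (((s : ℝ) + 1) * u) (s + 1)
  rw [← this]
  congr 1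
  push_cast
  ring

lemma trigV_neg (n m : ℕ) (u : ℝ) : trigV n m (-u) = trigV n m u := by
  simp [trigV, dirK_neg]

lemma trigV_periodic (n m : ℕ) : Function.Periodic (trigV n m) (2 * π) := by
  intro u
  simp [trigV, dirK_periodic]

lemma darboux_cos (r : ℕ) {t θ : ℝ} (ht : t ∈ Set.Icc 0 π) (hθ : θ ∈ Set.Icc 0 π) :
    darboux r (cos t) (cos θ) = (1 / π) * (dirK r (t - θ) + dirK r (t + θ)) := by
  have h1 : √(1 / π) * √(1 / π) = 1 / π := Real.mul_self_sqrt (by positivity)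
  have h2 : √(2 / π) * √(2 / π) = 2 / π := Real.mul_self_sqrt (by positivity)
  unfold darboux
  rw [Finset.sum_range_succ']
  have h0 : chebP 0 (cos t) * chebP 0 (cos θ) = 1 / π := by
    simp only [chebP, if_true]; exact h1
  have hs : ∀ s ∈ Finset.range r, chebP (s + 1) (cos t) * chebP (s + 1) (cos θ) =
      (1 / π) * (cos (((s : ℝ) + 1) * (t - θ)) + cos (((s : ℝ) + 1) * (t + θ))) := by
    intro s _
    simp only [chebP, Nat.succ_ne_zero, if_false]
    rw [Real.arccos_cos ht.1 ht.2, Real.arccos_cos hθ.1 hθ.2, mul_sub,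
      mul_add _ t θ, Real.cos_sub, Real.cos_add]
    push_cast
    linear_combination (cos (((s : ℝ) + 1) * t) * cos (((s : ℝ) + 1) * θ)) * h2
  rw [Finset.sum_congr rfl hs, h0, ← Finset.mul_sum, Finset.sum_add_distrib]
  unfold dirK
  ring

lemma vpK_cos (n m : ℕ) {t θ : ℝ} (ht : t ∈ Set.Icc 0 π) (hθ : θ ∈ Set.Icc 0 π) :
    vpK n m (cos t) (cos θ) = (1 / π) * (trigV n m (t - θ) + trigV n m (t + θ)) := by
  unfold vpK trigV
  simp only [darboux_cos _ ht hθ]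
  rw [← Finset.mul_sum, Finset.sum_add_distrib]
  ring

lemma dirK_mul_sin (r : ℕ) (u : ℝ) :
    2 * sin (u / 2) * dirK r u = sin (((r : ℝ) + 1 / 2) * u) := by
  induction r with
  | zero => simp [dirK]; ring_nf
  | succ r ih =>
    have : dirK (r + 1) u = dirK r u + cos (((r : ℝ) + 1) * u) := by
      simp [dirK, Finset.sum_range_succ, add_assoc]
    rw [this, mul_add, ih]
    have e1 : ((r : ℝ) + 1 / 2) * u = ((r : ℝ) + 1) * u - u / 2 := by ring
    have e2 : (((r + 1 : ℕ) : ℝ) + 1 / 2) * u = ((r : ℝ) + 1) * u + u / 2 := by push_cast; ring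
    rw [e1, e2, Real.sin_sub, Real.sin_add]
    ring

lemma sum_sin_half (N : ℕ) (u : ℝ) :
    2 * sin (u / 2) * ∑ r ∈ Finset.range N, sin (((r : ℝ) + 1 / 2) * u) = 1 - cos (N * u) := by
  induction N with
  | zero => simp
  | succ N ih =>
    rw [Finset.sum_range_succ, mul_add, ih]
    have e1 : (N : ℝ) * u = ((N : ℝ) + 1 / 2) * u - u / 2 := by ring
    have e2 : ((N + 1 : ℕ) : ℝ) * u = ((N : ℝ) + 1 / 2) * u + u / 2 := by push_cast; ring
    rw [e1, e2, Real.cos_sub, Real.cos_add]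
    ring

lemma trigV_closed {n m : ℕ} (hm : 0 < m) (hmn : m < n) (u : ℝ) :
    4 * m * sin (u / 2) ^ 2 * trigV n m u = sin (n * u) * sin (m * u) := by
  have hI : Finset.Icc (n - m) (n + m - 1) = Finset.Ico (n - m) (n + m) := by
    ext a; simp only [Finset.mem_Icc, Finset.mem_Ico]; omega
  have hS : (2 * sin (u / 2)) * ∑ r ∈ Finset.Ico (n - m) (n + m), dirK r u =
      ∑ r ∈ Finset.range (n + m), sin (((r : ℝ) + 1 / 2) * u)
        - ∑ r ∈ Finset.range (n - m), sin (((r : ℝ) + 1 / 2) * u) := by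
    rw [Finset.mul_sum, Finset.sum_congr rfl (fun r _ => dirK_mul_sin r u),
      Finset.sum_Ico_eq_sub _ (by omega)]
  have h1 := sum_sin_half (n + m) u
  have h2 := sum_sin_half (n - m) u
  rw [Nat.cast_sub hmn.le, sub_mul, Real.cos_sub] at h2
  rw [Nat.cast_add, add_mul, Real.cos_add] at h1
  have hm' : (m : ℝ) ≠ 0 := by positivity
  unfold trigV
  rw [hI]
  have : 4 * (m : ℝ) * sin (u / 2) ^ 2 *
      (1 / (2 * (m : ℝ)) * ∑ r ∈ Finset.Ico (n - m) (n + m), dirK r u) =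
      sin (u / 2) * ((2 * sin (u / 2)) * ∑ r ∈ Finset.Ico (n - m) (n + m), dirK r u) := by
    field_simp
    ring
  rw [this, hS]
  linear_combination (1 / 2) * h1 - (1 / 2) * h2

lemma inv_sin_sq_le {t : ℝ} (h0 : 0 < t) (h1 : t < π / 2) :
    1 / sin t ^ 2 ≤ 1 + 1 / t ^ 2 := by
  have ht := Real.lt_tan h0 h1
  have hs : 0 < sin t := Real.sin_pos_of_pos_of_lt_pi h0 (by linarith [Real.pi_pos])
  have hc : 0 < cos t := Real.cos_pos_of_mem_Ioo ⟨by linarith, h1⟩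
  rw [Real.tan_eq_sin_div_cos, lt_div_iff₀ hc] at ht
  have h3 : (t * cos t) ^ 2 ≤ sin t ^ 2 := by
    apply pow_le_pow_left₀ (by positivity) ht.le
  rw [div_le_iff₀ (by positivity)]
  have : (1 + 1 / t ^ 2) * sin t ^ 2 = sin t ^ 2 + sin t ^ 2 / t ^ 2 := by ring
  rw [this]
  have h4 : cos t ^ 2 ≤ sin t ^ 2 / t ^ 2 := by
    rw [le_div_iff₀ (by positivity)]; nlinarith
  nlinarith [Real.sin_sq_add_cos_sq t]

lemma trigV_abs {n m : ℕ} (hm : 0 < m) (hmn : m < n) {u : ℝ} (h0 : 0 < u) (h1 : u < π) :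
    |trigV n m u| ≤ |sin (n * u)| * |sin (m * u)| / m * (1 / 4 + 1 / u ^ 2) := by
  have hs : 0 < sin (u / 2) := Real.sin_pos_of_pos_of_lt_pi (by linarith) (by linarith)
  have hm' : (0 : ℝ) < m := by positivity
  have h := trigV_closed hm hmn u
  have hV : trigV n m u = sin (n * u) * sin (m * u) / m * (1 / 4 * (1 / sin (u / 2) ^ 2)) := by
    rw [← h]
    field_simp
  have hb := inv_sin_sq_le (t := u / 2) (by linarith) (by linarith)
  rw [hV, abs_mul, abs_div, abs_mul, abs_of_pos hm',
    abs_of_pos (show 0 < 1 / 4 * (1 / sin (u / 2) ^ 2) by positivity)]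
  apply mul_le_mul_of_nonneg_left _ (by positivity)
  calc 1 / 4 * (1 / sin (u / 2) ^ 2) ≤ 1 / 4 * (1 + 1 / (u / 2) ^ 2) := by gcongr
    _ = 1 / 4 + 1 / u ^ 2 := by field_simp; ring

lemma trigV_abs1 {n m : ℕ} (hm : 0 < m) (hmn : m < n) {u : ℝ} (h0 : 0 < u) (h1 : u < π) :
    |trigV n m u| ≤ |sin (n * u)| * (1 / u) + 1 := by
  have hm' : (0 : ℝ) < m := by positivity
  have h := trigV_abs hm hmn h0 h1
  have h2 : |sin (m * u)| / m ≤ u := by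
    rw [div_le_iff₀ hm']
    have := Real.abs_sin_le_abs (x := m * u)
    rw [abs_of_pos (show 0 < m * u by positivity)] at this
    linarith
  have h3 : |sin (n * u)| * |sin (m * u)| / m * (1 / 4 + 1 / u ^ 2) ≤
      |sin (n * u)| * (u * (1 / 4 + 1 / u ^ 2)) := by
    rw [mul_div_assoc, mul_assoc]
    gcongr
  have h4 : |sin (n * u)| * (u * (1 / 4 + 1 / u ^ 2)) =
      |sin (n * u)| * (1 / u) + |sin (n * u)| * (u / 4) := by field_simp; ring
  have h5 : |sin (n * u)| * (u / 4) ≤ 1 * 1 := by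
    gcongr
    · exact Real.abs_sin_le_one _
    · linarith [Real.pi_lt_four]
  linarith

lemma trigV_abs2 {n m : ℕ} (hm : 0 < m) (hmn : m < n) {u : ℝ} (h0 : 0 < u) (h1 : u < π) :
    |trigV n m u| ≤ 1 / m * (1 / 4 + 1 / u ^ 2) := by
  have hm' : (0 : ℝ) < m := by positivity
  have h := trigV_abs hm hmn h0 h1
  refine h.trans ?_
  gcongr
  exact mul_le_one₀ (Real.abs_sin_le_one _) (abs_nonneg _) (Real.abs_sin_le_one _)

lemma trigV_abs0 {n m : ℕ} (hm : 0 < m) (hmn : m < n) {u : ℝ} (h0 : 0 < u) (h1 : u < π) :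
    |trigV n m u| ≤ n + 1 := by
  have h := trigV_abs1 hm hmn h0 h1
  have : |sin (n * u)| * (1 / u) ≤ n := by
    rw [mul_one_div, div_le_iff₀ h0]
    have := Real.abs_sin_le_abs (x := n * u)
    rwa [abs_of_nonneg (show 0 ≤ n * u by positivity)] at this
  linarith

lemma integral_abs_sin_period (k : ℕ) : ∫ u in (k * π)..((k + 1 : ℝ) * π), |sin u| = 2 := by
  have hp : Function.Periodic (fun u => |sin u|) π := by
    intro u; simp [Real.sin_add_pi]
  have h := hp.intervalIntegral_add_eq (k * π) 0
  rw [show (k + 1 : ℝ) * π = k * π + π by ring, h, zero_add]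
  rw [intervalIntegral.integral_congr (g := sin)]
  · rw [integral_sin]; norm_num
  · intro u hu
    rw [Set.uIcc_of_le Real.pi_pos.le] at hu
    exact abs_of_nonneg (Real.sin_nonneg_of_mem_Icc hu)

lemma integral_abs_sin_scaled {n : ℕ} (hn : 0 < n) (k : ℕ) :
    ∫ u in (k * π / n)..((k + 1 : ℝ) * π / n), |sin (n * u)| = 2 / n := by
  have hn' : (n : ℝ) ≠ 0 := by positivity
  rw [intervalIntegral.integral_comp_mul_left (fun u => |sin u|) hn',
    mul_div_cancel₀ _ hn', mul_div_cancel₀ _ hn', integral_abs_sin_period]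
  simp; ring

lemma trigV_int (n m : ℕ) (a b : ℝ) :
    IntervalIntegrable (fun u => |trigV n m u|) volume a b :=
  (trigV_continuous n m).abs.intervalIntegrable _ _

lemma piece_head {n m : ℕ} (hm : 0 < m) (hmn : m < n) :
    ∫ u in (0 : ℝ)..(π / n), |trigV n m u| ≤ 2 * π := by
  have hn : (1 : ℝ) ≤ n := by exact_mod_cast (show 1 ≤ n by omega)
  have hle : π / n ≤ π := div_le_self Real.pi_pos.le hn
  have h := intervalIntegral.integral_mono_on_of_le_Ioo (a := 0) (b := π / n) (μ := volume)
    (f := fun u => |trigV n m u|) (g := fun _ => (n : ℝ) + 1) (by positivity)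
    (trigV_int _ _ _ _) (by simp)
    (fun u hu => trigV_abs0 hm hmn hu.1 (lt_of_lt_of_le hu.2 hle))
  refine h.trans ?_
  rw [intervalIntegral.integral_const, smul_eq_mul, sub_zero, div_mul_eq_mul_div,
    div_le_iff₀ (by positivity)]
  nlinarith [Real.pi_pos]

lemma piece_mid {n m : ℕ} (hm : 0 < m) (hmn : m < n) {k : ℕ} (hk : 1 ≤ k) (hkn : k < n) :
    ∫ u in (k * π / n)..((k + 1 : ℝ) * π / n), |trigV n m u| ≤ 2 / π * (k : ℝ)⁻¹ + π / n := by
  have hn : (0 : ℝ) < n := by exact_mod_cast (show 0 < n by omega)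
  have hk' : (0 : ℝ) < k := by exact_mod_cast hk
  have hkn' : (k + 1 : ℝ) ≤ n := by exact_mod_cast hkn
  have hab : k * π / n ≤ (k + 1 : ℝ) * π / n := by
    gcongr; linarith
  have hb : (k + 1 : ℝ) * π / n ≤ π := by
    rw [div_le_iff₀ hn]; nlinarith [Real.pi_pos]
  have ha : 0 < k * π / n := by positivity
  have h := intervalIntegral.integral_mono_on_of_le_Ioo (μ := volume)
    (f := fun u => |trigV n m u|) (g := fun u => |sin (n * u)| * (n / (k * π)) + 1) hab
    (trigV_int _ _ _ _) (Continuous.intervalIntegrable (by fun_prop) _ _)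
    (fun u hu => by
      have hu0 : 0 < u := ha.trans hu.1
      refine (trigV_abs1 hm hmn hu0 (lt_of_lt_of_le hu.2 hb)).trans ?_
      have : 1 / u ≤ n / (k * π) := by
        rw [show (n : ℝ) / (k * π) = 1 / (k * π / n) by field_simp]
        exact one_div_le_one_div_of_le ha hu.1.le
      gcongr)
  refine h.trans (le_of_eq ?_)
  rw [intervalIntegral.integral_add (Continuous.intervalIntegrable (by fun_prop) _ _)
    (by simp), intervalIntegral.integral_mul_const, integral_abs_sin_scaled (by omega),
    intervalIntegral.integral_const, smul_eq_mul]
  field_simp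
  ring

lemma piece_tail {n m : ℕ} (hm : 0 < m) (hmn : m < n) {a : ℝ} (ha : 0 < a) (haπ : a ≤ π) :
    ∫ u in a..π, |trigV n m u| ≤ 1 / m * (π / 4 + 1 / a) := by
  have hm' : (0 : ℝ) < m := by positivity
  have hci : IntervalIntegrable (fun u : ℝ => 1 / (m : ℝ) * (1 / 4 + 1 / u ^ 2)) volume a π := by
    apply ContinuousOn.intervalIntegrable
    rw [Set.uIcc_of_le haπ]
    intro u hu
    have : u ≠ 0 := (ha.trans_le hu.1).ne'
    have : u ^ 2 ≠ 0 := by positivity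
    apply ContinuousAt.continuousWithinAt
    fun_prop (disch := assumption)
  have h := intervalIntegral.integral_mono_on_of_le_Ioo (μ := volume)
    (f := fun u => |trigV n m u|) (g := fun u : ℝ => 1 / (m : ℝ) * (1 / 4 + 1 / u ^ 2)) haπ
    (trigV_int _ _ _ _) hci
    (fun u hu => trigV_abs2 hm hmn (ha.trans hu.1) hu.2)
  refine h.trans ?_
  rw [intervalIntegral.integral_eq_sub_of_hasDerivAt
    (f := fun u : ℝ => 1 / (m : ℝ) * (u / 4 - u⁻¹)) _ hci]
  · rw [← mul_sub]
    gcongr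
    have : 0 < π⁻¹ := by positivity
    rw [one_div]
    linarith
  · intro u hu
    rw [Set.uIcc_of_le haπ] at hu
    have hu0 : u ≠ 0 := (ha.trans_le hu.1).ne'
    have := (((hasDerivAt_id u).div_const 4).sub (hasDerivAt_inv hu0)).const_mul (1 / (m : ℝ))
    refine this.congr_deriv ?_
    rw [one_div (u ^ 2), sub_neg_eq_add]

lemma trigV_L1 {n m : ℕ} (hm : 0 < m) (hmn : m < n) :
    ∫ u in (0 : ℝ)..π, |trigV n m u| ≤
      2 / π * Real.log ((n : ℝ) / m) + (2 * π + 2 / π + π + π / 4 + 2 / π) := by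
  have hm' : (0 : ℝ) < m := by positivity
  have hm1 : (1 : ℝ) ≤ m := by exact_mod_cast hm
  have hn : (0 : ℝ) < n := by exact_mod_cast (show 0 < n by omega)
  obtain ⟨K, hKdef⟩ : ∃ K, K = n / m := ⟨_, rfl⟩
  have hK1 : 1 ≤ K := by rw [hKdef]; exact (Nat.one_le_div_iff hm).2 hmn.le
  have hKn : K ≤ n := by rw [hKdef]; exact Nat.div_le_self _ _
  have hKle : (K : ℝ) ≤ n / m := by rw [hKdef]; exact Nat.cast_div_le
  have hK0 : (0 : ℝ) < K := by exact_mod_cast hK1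
  have hlt : (n : ℝ) ≤ 2 * (K * m) := by
    have : n < m * (n / m + 1) := Nat.lt_mul_div_succ n hm
    rw [← hKdef] at this
    have h2 : n ≤ 2 * (K * m) := by nlinarith
    exact_mod_cast h2
  have hKn' : (K : ℝ) ≤ n := by exact_mod_cast hKn
  set a : ℕ → ℝ := fun k => k * π / n with ha
  have hmid : ∫ u in (a 1)..(a K), |trigV n m u| ≤ 2 / π * (1 + Real.log (n / m)) + π := by
    rw [← intervalIntegral.sum_integral_adjacent_intervals_Ico hK1
      (fun k _ => trigV_int n m _ _)]
    calc ∑ k ∈ Finset.Ico 1 K, ∫ u in (a k)..(a (k + 1)), |trigV n m u|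
        ≤ ∑ k ∈ Finset.Ico 1 K, (2 / π * (k : ℝ)⁻¹ + π / n) := by
          refine Finset.sum_le_sum fun k hk => ?_
          rw [Finset.mem_Ico] at hk
          have := piece_mid hm hmn hk.1 (lt_of_lt_of_le hk.2 hKn)
          simpa [ha] using this
      _ ≤ ∑ k ∈ Finset.Icc 1 K, (2 / π * (k : ℝ)⁻¹ + π / n) := by
          refine Finset.sum_le_sum_of_subset_of_nonneg ?_ (fun k _ _ => by positivity)
          intro k; simp only [Finset.mem_Icc, Finset.mem_Ico]; omega
      _ = 2 / π * (harmonic K : ℝ) + K * (π / n) := by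
          rw [Finset.sum_add_distrib, ← Finset.mul_sum, harmonic_eq_sum_Icc]
          simp
      _ ≤ 2 / π * (1 + Real.log (n / m)) + π := by
          have h1 := harmonic_le_one_add_log K
          have h2 : Real.log K ≤ Real.log (n / m) := Real.log_le_log hK0 hKle
          have h3 : K * (π / n) ≤ π := by
            rw [mul_div_assoc', div_le_iff₀ hn]; nlinarith [Real.pi_pos]
          gcongr
          linarith
  have h1 : a 1 = π / n := by simp [ha]
  have hapos : 0 < a K := by simp only [ha]; positivity
  have haπ : a K ≤ π := by
    simp only [ha]; rw [div_le_iff₀ hn]; nlinarith [Real.pi_pos]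
  have htail := piece_tail hm hmn hapos haπ
  have htail2 : 1 / (m : ℝ) * (π / 4 + 1 / a K) ≤ π / 4 + 2 / π := by
    rw [mul_add]
    have e1 : 1 / (m : ℝ) * (π / 4) ≤ π / 4 := by
      apply mul_le_of_le_one_left (by positivity)
      rw [div_le_one hm']; exact hm1
    have e2 : 1 / (m : ℝ) * (1 / a K) ≤ 2 / π := by
      simp only [ha]
      rw [show 1 / (m : ℝ) * (1 / (K * π / n)) = n / (K * m) / π by field_simp]
      gcongr
      rw [div_le_iff₀ (by positivity)]; exact hlt
    linarith
  have hhead := piece_head hm hmn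
  have hsplit : ∫ u in (0 : ℝ)..π, |trigV n m u| =
      (∫ u in (0 : ℝ)..(a 1), |trigV n m u|) + (∫ u in (a 1)..(a K), |trigV n m u|)
        + ∫ u in (a K)..π, |trigV n m u| := by
    rw [intervalIntegral.integral_add_adjacent_intervals (trigV_int _ _ _ _) (trigV_int _ _ _ _),
      intervalIntegral.integral_add_adjacent_intervals (trigV_int _ _ _ _) (trigV_int _ _ _ _)]
  rw [← h1] at hhead
  rw [hsplit]
  have : 2 / π * (1 + Real.log (n / m)) = 2 / π * Real.log (n / m) + 2 / π := by ring
  linarith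

lemma trigV_fold (n m : ℕ) (t : ℝ) :
    ∫ θ in (0 : ℝ)..π, (|trigV n m (t - θ)| + |trigV n m (t + θ)|) =
      2 * ∫ u in (0 : ℝ)..π, |trigV n m u| := by
  have hc := trigV_continuous n m
  have hp : Function.Periodic (fun u => |trigV n m u|) (2 * π) := fun u => by
    simp only [trigV_periodic n m u]
  rw [intervalIntegral.integral_add (Continuous.intervalIntegrable (by fun_prop) _ _)
    (Continuous.intervalIntegrable (by fun_prop) _ _),
    intervalIntegral.integral_comp_sub_left (fun u => |trigV n m u|),
    intervalIntegral.integral_comp_add_left (fun u => |trigV n m u|), sub_zero, add_zero,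
    intervalIntegral.integral_add_adjacent_intervals (trigV_int _ _ _ _) (trigV_int _ _ _ _),
    show t + π = (t - π) + 2 * π by ring, hp.intervalIntegral_add_eq (t - π) (-π),
    show -π + 2 * π = π by ring,
    ← intervalIntegral.integral_add_adjacent_intervals (b := 0) (trigV_int _ _ _ _)
      (trigV_int _ _ _ _)]
  have := intervalIntegral.integral_comp_neg (a := 0) (b := π) (fun u => |trigV n m u|)
  simp only [trigV_neg, neg_zero] at this
  rw [← this]
  ring

theorem vp_kernel_L1_bound :
    ∃ C : ℝ, 0 < C ∧ ∀ n m : ℕ, 0 < m → m < n →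
      ∀ x ∈ Set.Icc (-1 : ℝ) 1,
        (∫ y in (-1 : ℝ)..1, |vpK n m x y| * chebW y) ≤
          (4 / Real.pi ^ 2) * Real.log (((n : ℝ) + (m : ℝ) - 1) / (2 * (m : ℝ))) + C := by
  refine ⟨4 / π ^ 2 * Real.log 2 + 2 / π * (2 * π + 2 / π + π + π / 4 + 2 / π), ?_, ?_⟩
  · have := Real.log_pos (show (1 : ℝ) < 2 by norm_num)
    positivity
  intro n m hm hmn x hx
  have hm' : (0 : ℝ) < m := by positivity
  have hm1 : (1 : ℝ) ≤ m := by exact_mod_cast hm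
  have hn : (0 : ℝ) < n := by exact_mod_cast (show 0 < n by omega)
  have hcv : (∫ y in (-1 : ℝ)..1, |vpK n m x y| * chebW y) =
      ∫ θ in (0 : ℝ)..π, |vpK n m x (cos θ)| := by
    rw [← Polynomial.Chebyshev.integral_measureT_eq_integral_cos (f := fun y => |vpK n m x y|),
      Polynomial.Chebyshev.integral_measureT]
    simp only [chebW, one_div, Real.sqrt_inv]
  have ht : Real.arccos x ∈ Set.Icc 0 π := ⟨Real.arccos_nonneg x, Real.arccos_le_pi x⟩
  have hxt : x = cos (Real.arccos x) := (Real.cos_arccos hx.1 hx.2).symm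
  set t := Real.arccos x
  have hc := trigV_continuous n m
  have hbound : ∫ θ in (0 : ℝ)..π, |vpK n m x (cos θ)| ≤
      (1 / π) * (2 * ∫ u in (0 : ℝ)..π, |trigV n m u|) := by
    rw [← trigV_fold n m t, ← intervalIntegral.integral_const_mul]
    rw [intervalIntegral.integral_congr
      (g := fun θ => |(1 / π) * (trigV n m (t - θ) + trigV n m (t + θ))|)]
    · apply intervalIntegral.integral_mono_on Real.pi_pos.le
        (Continuous.intervalIntegrable (by fun_prop) _ _)
        (Continuous.intervalIntegrable (by fun_prop) _ _)
      intro θ _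
      rw [abs_mul, abs_of_pos (show 0 < 1 / π by positivity)]
      gcongr
      exact abs_add_le _ _
    · intro θ hθ
      rw [Set.uIcc_of_le Real.pi_pos.le] at hθ
      simp only
      rw [hxt, vpK_cos n m ht hθ]
  have hlog : Real.log ((n : ℝ) / m) ≤
      Real.log 2 + Real.log (((n : ℝ) + (m : ℝ) - 1) / (2 * (m : ℝ))) := by
    have hp : 0 < ((n : ℝ) + (m : ℝ) - 1) / (2 * (m : ℝ)) := by
      apply div_pos <;> linarith
    rw [← Real.log_mul (by norm_num) hp.ne']
    apply Real.log_le_log (by positivity)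
    rw [show 2 * (((n : ℝ) + (m : ℝ) - 1) / (2 * (m : ℝ))) = ((n : ℝ) + m - 1) / m by
      field_simp]
    gcongr
    linarith
  rw [hcv]
  refine hbound.trans ?_
  have hL := trigV_L1 hm hmn
  have h2 : 2 / π * ∫ u in (0 : ℝ)..π, |trigV n m u| ≤
      2 / π * (2 / π * (Real.log 2 + Real.log (((n : ℝ) + (m : ℝ) - 1) / (2 * (m : ℝ)))) +
        (2 * π + 2 / π + π + π / 4 + 2 / π)) := by
    refine mul_le_mul_of_nonneg_left (hL.trans ?_) (by positivity)
    gcongr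
  refine le_trans (le_of_eq (by ring)) (h2.trans (le_of_eq ?_))
  ring
end

section
/- For all integers n, m with 0 < m < n, every 1 ≤ p < ∞ with conjugate exponent p' (1/p + 1/p' = 1), and every vector a = (a_1,…,a_n) ∈ ℝ^n, the scaling basis satisfies the L^p Riesz bounds: (1/(1+4π))·‖a‖_{ℓ^p} ≤ ‖Σ_{k=1}^{n} a_k Φ_{n,k}^m‖_p ≤ c_{p'}·(1+4π)·‖a‖_{ℓ^p}, where ‖a‖_{ℓ^p} = ((π/n) Σ_{k=1}^{n} |a_k|^p)^{1/p}, ‖f‖_p = (∫_{−1}^{1} |f(x)|^p w(x) dx)^{1/p}, and c_{p'} = sup{‖σ_n^m f‖_{p'} : ‖f‖_{p'} = 1} is the L^{p'} operator norm of the VP operator σ_n^m (with ‖·‖_∞ the sup norm on [−1,1] when p' = ∞). -/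
open Real MeasureTheory Finset

/-- The de la Vallée Poussin operator `σ_n^m`. -/
noncomputable def vpOp (n m : ℕ) (f : ℝ → ℝ) (x : ℝ) : ℝ :=
  ∫ y in (-1 : ℝ)..1, vpK n m x y * f y * chebW y

/-- The weighted `L^q` norm on `[-1,1]`. -/
noncomputable def lpNorm (q : ℝ) (f : ℝ → ℝ) : ℝ :=
  (∫ x in (-1 : ℝ)..1, |f x| ^ q * chebW x) ^ (1 / q)

/-- The `L^q` operator norm (Lebesgue constant) of the VP operator, `1 ≤ q < ∞`. -/
noncomputable def vpOpNormLp (n m : ℕ) (q : ℝ) : ℝ :=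
  sSup {a : ℝ | ∃ f : ℝ → ℝ, Continuous f ∧ lpNorm q f = 1 ∧ a = lpNorm q (vpOp n m f)}

/-- The uniform-norm operator norm (Lebesgue constant) of the VP operator. -/
noncomputable def vpOpNormSup (n m : ℕ) : ℝ :=
  sSup {a : ℝ | ∃ f : ℝ → ℝ, Continuous f ∧ supNorm f = 1 ∧ a = supNorm (vpOp n m f)}

namespace VPR

/-- Change of variables `x = cos θ`. -/
lemma cov (G : ℝ → ℝ) : (∫ x in (-1 : ℝ)..1, G x * chebW x) = ∫ θ in (0 : ℝ)..π, G (cos θ) := by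
  rw [← Polynomial.Chebyshev.integral_measureT_eq_integral_cos,
    Polynomial.Chebyshev.integral_measureT]
  refine intervalIntegral.integral_congr fun x _ => ?_
  simp [chebW]

lemma int_cos_int (d : ℤ) : (∫ t in (0 : ℝ)..π, cos (d * t)) = if d = 0 then π else 0 := by
  split_ifs with h
  · simp [h]
  · have hd : (d : ℝ) ≠ 0 := Int.cast_ne_zero.mpr h
    rw [intervalIntegral.integral_comp_mul_left (fun u => cos u) hd]
    simp [integral_cos, sin_int_mul_pi]

lemma int_cos_cos (s d : ℤ) : (∫ t in (0 : ℝ)..π, cos (s * t) * cos (d * t)) =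
    π / 2 * ((if d = s then 1 else 0) + (if d = -s then 1 else 0)) := by
  have h : ∀ t : ℝ, cos (s * t) * cos (d * t) =
      1 / 2 * (cos ((d - s : ℤ) * t) + cos ((d + s : ℤ) * t)) := by
    intro t
    push_cast
    rw [sub_mul, add_mul, cos_sub, cos_add]; ring
  simp_rw [h]
  rw [intervalIntegral.integral_const_mul, intervalIntegral.integral_add
    (Continuous.intervalIntegrable (by fun_prop) _ _)
    (Continuous.intervalIntegrable (by fun_prop) _ _), int_cos_int, int_cos_int]
  have e1 : d - s = 0 ↔ d = s := sub_eq_zero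
  have e2 : d + s = 0 ↔ d = -s := add_eq_zero_iff_eq_neg
  simp only [e1, e2]
  split_ifs <;> ring

/-- Symmetrised Fejér kernel. -/
noncomputable def fej (M : ℕ) (θ t : ℝ) : ℝ :=
  1 / (M : ℝ) * ∑ j ∈ range M, ∑ l ∈ range M,
    cos (((j : ℤ) - (l : ℤ) : ℤ) * θ) * cos (((j : ℤ) - (l : ℤ) : ℤ) * t)

lemma fej_aux (M : ℕ) (u : ℝ) :
    0 ≤ ∑ j ∈ range M, ∑ l ∈ range M, cos (((j : ℤ) - (l : ℤ) : ℤ) * u) := by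
  have : ∑ j ∈ range M, ∑ l ∈ range M, cos (((j : ℤ) - (l : ℤ) : ℤ) * u) =
      (∑ j ∈ range M, cos (j * u)) ^ 2 + (∑ j ∈ range M, sin (j * u)) ^ 2 := by
    rw [sq, sq, sum_mul_sum, sum_mul_sum, ← sum_add_distrib]
    refine sum_congr rfl fun j _ => ?_
    rw [← sum_add_distrib]
    refine sum_congr rfl fun l _ => ?_
    push_cast
    rw [sub_mul, cos_sub]
  rw [this]; positivity

lemma fej_nonneg (M : ℕ) (θ t : ℝ) : 0 ≤ fej M θ t := by
  unfold fej
  refine mul_nonneg (by positivity) ?_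
  have h : ∀ j l : ℕ, cos (((j : ℤ) - (l : ℤ) : ℤ) * θ) * cos (((j : ℤ) - (l : ℤ) : ℤ) * t) =
      1 / 2 * cos (((j : ℤ) - (l : ℤ) : ℤ) * (θ + t)) +
      1 / 2 * cos (((j : ℤ) - (l : ℤ) : ℤ) * (θ - t)) := by
    intro j l
    rw [mul_add, mul_sub, cos_add, cos_sub]; ring
  simp_rw [h, sum_add_distrib, ← mul_sum]
  have := fej_aux M (θ + t)
  have := fej_aux M (θ - t)
  positivity

@[fun_prop]
lemma fej_cont (M : ℕ) (θ : ℝ) : Continuous (fun t => fej M θ t) := by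
  unfold fej; fun_prop

lemma count_aux (M s : ℕ) (hs : s ≤ M) :
    ∑ j ∈ range M, ∑ l ∈ range M, (if (j : ℤ) - l = s then (1 : ℝ) else 0) = M - s := by
  rw [sum_comm]
  have : ∀ l ∈ range M, ∑ j ∈ range M, (if (j : ℤ) - l = s then (1 : ℝ) else 0)
      = if l < M - s then 1 else 0 := by
    intro l hl
    have : ∀ j ∈ range M, (if (j : ℤ) - l = s then (1 : ℝ) else 0) = if l + s = j then 1 else 0 := by
      intro j _
      congr 1
      exact propext ⟨fun h => by omega, fun h => by omega⟩
    rw [sum_congr rfl this, sum_ite_eq]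
    congr 1
    rw [mem_range]
    exact propext ⟨fun h => by omega, fun h => by omega⟩
  rw [sum_congr rfl this, ← sum_filter]
  have : (range M).filter (fun l => l < M - s) = range (M - s) := by
    ext; simp; omega
  rw [this]; simp [Nat.cast_sub hs]

lemma fej_repr (M s : ℕ) (hM : 0 < M) (hs : s ≤ M) (θ : ℝ) :
    (∫ t in (0 : ℝ)..π, cos (s * t) * fej M θ t) = π * (1 - s / M) * cos (s * θ) := by
  have h : ∀ t : ℝ, cos (s * t) * fej M θ t = 1 / (M : ℝ) * ∑ j ∈ range M, ∑ l ∈ range M,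
      cos (((j : ℤ) - (l : ℤ) : ℤ) * θ) *
        (cos ((s : ℤ) * t) * cos (((j : ℤ) - (l : ℤ) : ℤ) * t)) := by
    intro t
    unfold fej
    rw [mul_left_comm, mul_sum]
    congr 1
    refine sum_congr rfl fun j _ => ?_
    rw [mul_sum]
    refine sum_congr rfl fun l _ => ?_
    push_cast; ring
  simp_rw [h]
  rw [intervalIntegral.integral_const_mul, intervalIntegral.integral_finsetSum
    (fun j _ => Continuous.intervalIntegrable (by fun_prop) _ _)]
  have h2 : ∀ j ∈ range M, (∫ t in (0 : ℝ)..π, ∑ l ∈ range M,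
      cos (((j : ℤ) - (l : ℤ) : ℤ) * θ) *
        (cos ((s : ℤ) * t) * cos (((j : ℤ) - (l : ℤ) : ℤ) * t))) =
      ∑ l ∈ range M, π / 2 * cos (s * θ) * ((if (j : ℤ) - l = s then (1 : ℝ) else 0) +
        (if (l : ℤ) - j = s then (1 : ℝ) else 0)) := by
    intro j _
    rw [intervalIntegral.integral_finsetSum
      (fun j _ => Continuous.intervalIntegrable (by fun_prop) _ _)]
    refine sum_congr rfl fun l _ => ?_
    rw [intervalIntegral.integral_const_mul, int_cos_cos]
    have e : ((j : ℤ) - l = -s) ↔ ((l : ℤ) - j = s) := by omega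
    simp only [e]
    split_ifs with h1 h2 h2
    · rw [h1]; push_cast; ring
    · rw [h1]; push_cast; ring
    · have : (j : ℤ) - l = -s := by omega
      rw [this]; push_cast; rw [neg_mul, cos_neg]; ring
    · ring
  rw [sum_congr rfl h2]
  simp_rw [← mul_sum, sum_add_distrib]
  rw [count_aux M s hs, sum_comm, count_aux M s hs]
  have : (M : ℝ) ≠ 0 := by positivity
  field_simp; ring

/-- The nodes in the angular variable. -/
noncomputable def th (n k : ℕ) : ℝ := (2 * (k : ℝ) - 1) * π / (2 * (n : ℝ))

lemma sum_cos_node_mul (n : ℕ) (β : ℝ) :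
    2 * sin β * ∑ k ∈ Icc 1 n, cos ((2 * (k : ℝ) - 1) * β) = sin (2 * n * β) := by
  induction n with
  | zero => simp
  | succ n ih =>
    rw [sum_Icc_succ_top (by omega), mul_add, ih]
    push_cast
    have e1 : (2 * ((n : ℝ) + 1) - 1) * β = 2 * n * β + β := by ring
    have e2 : 2 * ((n : ℝ) + 1) * β = 2 * n * β + 2 * β := by ring
    rw [e1, e2, sin_add (2 * n * β) (2 * β), cos_add, cos_two_mul, sin_two_mul]
    have := sin_sq_add_cos_sq β
    linear_combination (-2 * sin (2 * n * β)) * this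

lemma sum_cos_node (n : ℕ) (hn : 0 < n) (d : ℤ) (hd : ¬ (2 * (n : ℤ)) ∣ d) :
    ∑ k ∈ Icc 1 n, cos (d * th n k) = 0 := by
  have hn' : (n : ℝ) ≠ 0 := by positivity
  have h := sum_cos_node_mul n (d * π / (2 * n))
  have e : 2 * (n : ℝ) * (d * π / (2 * n)) = d * π := by field_simp
  rw [e, sin_int_mul_pi] at h
  have hs : sin (d * π / (2 * n)) ≠ 0 := by
    intro h0
    rw [sin_eq_zero_iff] at h0
    obtain ⟨c, hc⟩ := h0
    apply hd
    refine ⟨c, ?_⟩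
    have hpi := pi_ne_zero
    field_simp at hc
    have : (d : ℝ) = ((2 * n * c : ℤ) : ℝ) := by push_cast; linarith
    exact_mod_cast this
  have h3 : ∑ k ∈ Icc 1 n, cos ((2 * (k : ℝ) - 1) * (d * π / (2 * n))) = 0 := by
    rcases mul_eq_zero.1 h with h4 | h4
    · exact absurd h4 (by simpa using hs)
    · exact h4
  rw [← h3]
  refine sum_congr rfl fun k _ => ?_
  unfold th; congr 1; ring

lemma count_dvd (N q j : ℕ) (hN : 0 < N) :
    ∑ l ∈ range (N * q), (if (N : ℤ) ∣ (j : ℤ) - l then (1 : ℝ) else 0) = q := by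
  rw [sum_ite, sum_const_zero, add_zero, sum_const, nsmul_eq_mul, mul_one]
  have e : (range (N * q)).filter (fun l : ℕ => (N : ℤ) ∣ (j : ℤ) - l) =
      (range (N * q)).filter (fun l : ℕ => l ≡ j [MOD N]) := by
    ext l
    simp only [mem_filter, Nat.modEq_iff_dvd]
  rw [e, ← Nat.count_eq_card_filter_range, Nat.count_modEq_card _ hN]
  simp [Nat.mul_div_cancel_left q hN]

lemma fej_node (n q : ℕ) (hn : 0 < n) (hq : 0 < q) (t : ℝ) :
    ∑ k ∈ Icc 1 n, fej (2 * n * q) (th n k) t ≤ q * n := by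
  unfold fej
  rw [← mul_sum, sum_comm]
  have h : ∀ j ∈ range (2 * n * q), ∑ k ∈ Icc 1 n, ∑ l ∈ range (2 * n * q),
      cos (((j : ℤ) - (l : ℤ) : ℤ) * th n k) * cos (((j : ℤ) - (l : ℤ) : ℤ) * t) ≤ q * n := by
    intro j _
    rw [sum_comm]
    have : ∀ l ∈ range (2 * n * q), ∑ k ∈ Icc 1 n,
        cos (((j : ℤ) - (l : ℤ) : ℤ) * th n k) * cos (((j : ℤ) - (l : ℤ) : ℤ) * t) ≤
        (if ((2 * n : ℕ) : ℤ) ∣ (j : ℤ) - l then (1 : ℝ) else 0) * n := by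
      intro l _
      split_ifs with hd
      · calc _ ≤ ∑ k ∈ Icc 1 n, (1 : ℝ) := by
              refine sum_le_sum fun k _ => ?_
              refine (le_abs_self _).trans ?_
              rw [abs_mul]
              exact mul_le_one₀ (abs_cos_le_one _) (abs_nonneg _) (abs_cos_le_one _)
          _ = _ := by simp
      · rw [← sum_mul, sum_cos_node n hn _ (by exact_mod_cast hd)]; simp
    refine (sum_le_sum this).trans ?_
    rw [← sum_mul, count_dvd _ _ _ (by omega)]
  refine (mul_le_mul_of_nonneg_left (sum_le_sum h) (by positivity)).trans (le_of_eq ?_)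
  rw [sum_const, card_range, nsmul_eq_mul]
  have : (n : ℝ) ≠ 0 := by positivity
  have : (q : ℝ) ≠ 0 := by positivity
  push_cast
  field_simp

/-- Jensen's inequality for a weight of total mass `S`. -/
lemma jensen (g W : ℝ → ℝ) (hg : Continuous g) (hW : Continuous W) (g0 : ∀ t, 0 ≤ g t)
    (W0 : ∀ t, 0 ≤ W t) (p : ℝ) (hp : 1 ≤ p) (S : ℝ) (hS : 0 < S)
    (hWS : (∫ t in (0 : ℝ)..π, W t) = S) :
    ((∫ t in (0 : ℝ)..π, g t * W t) / S) ^ p ≤ (∫ t in (0 : ℝ)..π, g t ^ p * W t) / S := by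
  have hp0 : 0 ≤ p := by linarith
  set I := ∫ t in (0 : ℝ)..π, g t * W t with hI
  have I0 : 0 ≤ I := intervalIntegral.integral_nonneg pi_pos.le
    fun t _ => mul_nonneg (g0 t) (W0 t)
  have J0 : 0 ≤ ∫ t in (0 : ℝ)..π, g t ^ p * W t :=
    intervalIntegral.integral_nonneg pi_pos.le
      fun t _ => mul_nonneg (rpow_nonneg (g0 t) p) (W0 t)
  rcases I0.eq_or_lt with h0 | hpos
  · rw [← h0, zero_div, zero_rpow (by linarith)]
    positivity
  set c := I / S with hc
  have cpos : 0 < c := by positivity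
  have hcp : 0 < c ^ p := rpow_pos_of_pos cpos p
  have key : ∀ t, (c ^ p * (1 - p)) * W t + (c ^ p * p / c) * (g t * W t) ≤ g t ^ p * W t := by
    intro t
    have hb := one_add_mul_self_le_rpow_one_add (s := g t / c - 1)
      (by have := div_nonneg (g0 t) cpos.le; linarith) hp
    rw [add_sub_cancel, div_rpow (g0 t) cpos.le, le_div_iff₀ hcp] at hb
    have := mul_le_mul_of_nonneg_right hb (W0 t)
    refine le_trans (le_of_eq ?_) this
    field_simp; ring
  have hcg : Continuous fun t => g t ^ p := hg.rpow_const fun _ => Or.inr hp0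
  have hle := intervalIntegral.integral_mono (μ := volume) pi_pos.le
    (Continuous.intervalIntegrable (by fun_prop) _ _)
    (Continuous.intervalIntegrable (by fun_prop) _ _) key
  rw [intervalIntegral.integral_add (Continuous.intervalIntegrable (by fun_prop) _ _)
    (Continuous.intervalIntegrable (by fun_prop) _ _), intervalIntegral.integral_const_mul,
    intervalIntegral.integral_const_mul, hWS, ← hI] at hle
  rw [le_div_iff₀ hS]
  refine le_trans (le_of_eq ?_) hle
  have : I = c * S := by rw [hc]; field_simp
  rw [this]; field_simp; ring

lemma repr_poly (n : ℕ) (hn : 0 < n) (b : ℕ → ℝ) (F : ℝ → ℝ)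
    (hF : ∀ θ, F θ = ∑ s ∈ range (2 * n), b s * cos (s * θ)) (θ : ℝ) :
    (∫ t in (0 : ℝ)..π, F t * (2 * fej (2 * n * 2) θ t - fej (2 * n * 1) θ t)) = π * F θ := by
  have h : ∀ t, F t * (2 * fej (2 * n * 2) θ t - fej (2 * n * 1) θ t) =
      ∑ s ∈ range (2 * n), b s * (2 * (cos (s * t) * fej (2 * n * 2) θ t) -
        cos (s * t) * fej (2 * n * 1) θ t) := by
    intro t
    rw [hF, sum_mul]
    refine sum_congr rfl fun s _ => ?_
    ring
  simp_rw [h]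
  rw [intervalIntegral.integral_finsetSum
    (fun j _ => Continuous.intervalIntegrable (by fun_prop) _ _), hF, mul_sum]
  refine sum_congr rfl fun s hs => ?_
  rw [mem_range] at hs
  rw [intervalIntegral.integral_const_mul, intervalIntegral.integral_sub
    (Continuous.intervalIntegrable (by fun_prop) _ _)
    (Continuous.intervalIntegrable (by fun_prop) _ _), intervalIntegral.integral_const_mul,
    fej_repr _ _ (by omega) (by omega), fej_repr _ _ (by omega) (by omega)]
  have : (n : ℝ) ≠ 0 := by positivity
  push_cast
  field_simp
  ring

/-- Marcinkiewicz inequality (angular form). -/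
lemma marc (n : ℕ) (hn : 0 < n) (b : ℕ → ℝ) (F : ℝ → ℝ)
    (hF : ∀ θ, F θ = ∑ s ∈ range (2 * n), b s * cos (s * θ)) (p : ℝ) (hp : 1 ≤ p) :
    π / n * ∑ k ∈ Icc 1 n, |F (th n k)| ^ p ≤
      (1 + 4 * π) ^ p * ∫ t in (0 : ℝ)..π, |F t| ^ p := by
  have hp0 : 0 ≤ p := by linarith
  have hn' : (0 : ℝ) < n := by positivity
  have hFc : Continuous F := by
    have : F = fun θ => ∑ s ∈ range (2 * n), b s * cos (s * θ) := funext hF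
    rw [this]; fun_prop
  have hFp : Continuous fun t => |F t| ^ p := hFc.abs.rpow_const fun _ => Or.inr hp0
  set W : ℝ → ℝ → ℝ := fun θ t => 2 * fej (2 * n * 2) θ t + fej (2 * n * 1) θ t with hW
  have Wc : ∀ θ, Continuous (W θ) := fun θ => by simp only [hW]; fun_prop
  have W0 : ∀ θ t, 0 ≤ W θ t := fun θ t => by
    have := fej_nonneg (2 * n * 2) θ t
    have := fej_nonneg (2 * n * 1) θ t
    simp only [hW]; positivity
  have Wint : ∀ θ, (∫ t in (0 : ℝ)..π, W θ t) = 3 * π := by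
    intro θ
    have h1 := fej_repr (2 * n * 2) 0 (by omega) (by omega) θ
    have h2 := fej_repr (2 * n * 1) 0 (by omega) (by omega) θ
    simp only [Nat.cast_zero, zero_mul, cos_zero, one_mul, zero_div, sub_zero, mul_one] at h1 h2
    simp only [hW, mul_one]
    rw [intervalIntegral.integral_add (Continuous.intervalIntegrable (by fun_prop) _ _)
      (Continuous.intervalIntegrable (by fun_prop) _ _), intervalIntegral.integral_const_mul,
      h1, h2]
    ring
  have Wsum : ∀ t, ∑ k ∈ Icc 1 n, W (th n k) t ≤ 5 * n := by
    intro t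
    simp only [hW]
    rw [sum_add_distrib, ← mul_sum]
    have h1 := fej_node n 2 hn (by norm_num) t
    have h2 := fej_node n 1 hn (by norm_num) t
    push_cast at h1 h2
    linarith
  have pt : ∀ θ, |F θ| ^ p ≤ 3 ^ p / (3 * π) * ∫ t in (0 : ℝ)..π, |F t| ^ p * W θ t := by
    intro θ
    have hj := jensen (fun t => |F t|) (W θ) hFc.abs (Wc θ) (fun t => abs_nonneg _) (W0 θ) p hp
      (3 * π) (by positivity) (Wint θ)
    have hr := repr_poly n hn b F hF θ
    have hb : π * |F θ| ≤ ∫ t in (0 : ℝ)..π, |F t| * W θ t := by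
      rw [← abs_of_pos pi_pos, ← abs_mul, abs_of_pos pi_pos, ← hr]
      refine (intervalIntegral.abs_integral_le_integral_abs pi_pos.le).trans ?_
      refine intervalIntegral.integral_mono (μ := volume) pi_pos.le
        (Continuous.intervalIntegrable (by fun_prop) _ _)
        (Continuous.intervalIntegrable (by have := Wc θ; fun_prop) _ _) fun t => ?_
      simp only [abs_mul]
      refine mul_le_mul_of_nonneg_left ?_ (abs_nonneg _)
      have := fej_nonneg (2 * n * 2) θ t
      have := fej_nonneg (2 * n * 1) θ t
      simp only [hW]
      rw [abs_le]; constructor <;> linarith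
    have h3 : |F θ| / 3 ≤ (∫ t in (0 : ℝ)..π, |F t| * W θ t) / (3 * π) := by
      rw [div_le_div_iff₀ (by norm_num) (by positivity)]
      nlinarith
    have h4 := (rpow_le_rpow (by positivity) h3 hp0).trans hj
    rw [div_rpow (abs_nonneg _) (by norm_num), div_le_iff₀ (by positivity)] at h4
    refine h4.trans (le_of_eq ?_)
    ring
  have hI0 : 0 ≤ ∫ t in (0 : ℝ)..π, |F t| ^ p := intervalIntegral.integral_nonneg pi_pos.le
    fun t _ => by positivity
  have hs : ∑ k ∈ Icc 1 n, ∫ t in (0 : ℝ)..π, |F t| ^ p * W (th n k) t ≤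
      5 * n * ∫ t in (0 : ℝ)..π, |F t| ^ p := by
    rw [← intervalIntegral.integral_finsetSum
      (fun k _ => Continuous.intervalIntegrable (by have := Wc (th n k); fun_prop) _ _),
      ← intervalIntegral.integral_const_mul]
    refine intervalIntegral.integral_mono (μ := volume) pi_pos.le
        (Continuous.intervalIntegrable (continuous_finsetSum _ fun k _ => hFp.mul (Wc _)) _ _)
        (Continuous.intervalIntegrable (by fun_prop) _ _) fun t => ?_
    simp only
    rw [← mul_sum, mul_comm]
    exact mul_le_mul_of_nonneg_right (Wsum t) (by positivity)
  have h35 : 5 * (3 : ℝ) ^ p / 3 ≤ (1 + 4 * π) ^ p := by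
    have e3 : (3 : ℝ) ^ p = 3 * 3 ^ (p - 1) := by
      rw [rpow_sub_one (by norm_num)]; ring
    have e5 : (5 : ℝ) ^ p = 5 * 5 ^ (p - 1) := by
      rw [rpow_sub_one (by norm_num)]; ring
    have h1 : (3 : ℝ) ^ (p - 1) ≤ 5 ^ (p - 1) :=
      rpow_le_rpow (by norm_num) (by norm_num) (by linarith)
    have h2 : (5 : ℝ) ^ p ≤ (1 + 4 * π) ^ p :=
      rpow_le_rpow (by norm_num) (by nlinarith [pi_gt_three]) hp0
    rw [e3]; linarith
  calc π / n * ∑ k ∈ Icc 1 n, |F (th n k)| ^ p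
      ≤ π / n * ∑ k ∈ Icc 1 n, (3 ^ p / (3 * π) * ∫ t in (0 : ℝ)..π, |F t| ^ p * W (th n k) t) := by
        gcongr with k _
        exact pt _
    _ ≤ π / n * (3 ^ p / (3 * π) * (5 * n * ∫ t in (0 : ℝ)..π, |F t| ^ p)) := by
        rw [← mul_sum]
        gcongr
    _ = (5 * (3 : ℝ) ^ p / 3) * ∫ t in (0 : ℝ)..π, |F t| ^ p := by
        field_simp
    _ ≤ _ := by gcongr

noncomputable def cP (r : ℕ) : ℝ := if r = 0 then √(1 / π) else √(2 / π)

lemma cP_sq (r : ℕ) : cP r * cP r = if r = 0 then 1 / π else 2 / π := by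
  unfold cP
  split_ifs <;> exact mul_self_sqrt (by positivity)

lemma chebP_cos (r : ℕ) (θ : ℝ) (h0 : 0 ≤ θ) (h1 : θ ≤ π) :
    chebP r (cos θ) = cP r * cos (r * θ) := by
  unfold chebP cP
  rw [arccos_cos h0 h1]
  split_ifs with h
  · simp [h]
  · rfl

@[fun_prop]
lemma chebP_cont (r : ℕ) : Continuous (chebP r) := by
  unfold chebP
  split_ifs
  · exact continuous_const
  · have := continuous_arccos
    fun_prop

lemma th_mem (n k : ℕ) (hk : k ∈ Icc 1 n) : 0 ≤ th n k ∧ th n k ≤ π := by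
  rw [mem_Icc] at hk
  have h1 : (1 : ℝ) ≤ k := by exact_mod_cast hk.1
  have h2 : (k : ℝ) ≤ n := by exact_mod_cast hk.2
  have h3 : (0 : ℝ) < n := by linarith
  unfold th
  constructor
  · have : 0 ≤ 2 * (k : ℝ) - 1 := by linarith
    positivity
  · rw [div_le_iff₀ (by positivity)]
    nlinarith [pi_pos]

lemma node_eq (n k : ℕ) : chebNode n k = cos (th n k) := rfl

noncomputable def kap (n m s : ℕ) : ℝ :=
  (1 / (2 * (m : ℝ))) * ∑ r ∈ Icc (n - m) (n + m - 1), if s < r + 1 then 1 else 0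

lemma vpK_expand (n m : ℕ) (hmn : m < n) (x y : ℝ) :
    vpK n m x y = ∑ s ∈ range (2 * n), kap n m s * (chebP s x * chebP s y) := by
  unfold vpK kap
  have : ∀ r ∈ Icc (n - m) (n + m - 1), darboux r x y =
      ∑ s ∈ range (2 * n), (if s < r + 1 then 1 else 0) * (chebP s x * chebP s y) := by
    intro r hr
    rw [mem_Icc] at hr
    simp only [ite_mul, one_mul, zero_mul]
    rw [← sum_filter]
    unfold darboux
    refine sum_congr ?_ fun _ _ => rfl
    ext s; simp; omega
  rw [sum_congr rfl this, sum_comm, mul_sum]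
  refine sum_congr rfl fun s _ => ?_
  rw [mul_assoc, sum_mul]

/-- Marcinkiewicz inequality for algebraic polynomials. -/
lemma marc_poly (n : ℕ) (hn : 0 < n) (b : ℕ → ℝ) (f : ℝ → ℝ)
    (hf : ∀ x, f x = ∑ s ∈ range (2 * n), b s * chebP s x) (p : ℝ) (hp : 1 ≤ p) :
    (π / n * ∑ k ∈ Icc 1 n, |f (chebNode n k)| ^ p) ^ (1 / p) ≤
      (1 + 4 * π) * _root_.lpNorm p f := by
  have hp0 : 0 < p := by linarith
  set F : ℝ → ℝ := fun θ => ∑ s ∈ range (2 * n), (b s * cP s) * cos (s * θ) with hF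
  have hfF : ∀ θ, 0 ≤ θ → θ ≤ π → f (cos θ) = F θ := by
    intro θ h0 h1
    rw [hf, hF]
    refine sum_congr rfl fun s _ => ?_
    rw [chebP_cos s θ h0 h1]; ring
  have h := marc n hn _ F (fun θ => rfl) p hp
  unfold _root_.lpNorm
  rw [cov (fun x => |f x| ^ p)]
  have e1 : ∑ k ∈ Icc 1 n, |f (chebNode n k)| ^ p = ∑ k ∈ Icc 1 n, |F (th n k)| ^ p := by
    refine sum_congr rfl fun k hk => ?_
    rw [node_eq, hfF _ (th_mem n k hk).1 (th_mem n k hk).2]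
  have e2 : (∫ θ in (0 : ℝ)..π, |f (cos θ)| ^ p) = ∫ θ in (0 : ℝ)..π, |F θ| ^ p := by
    refine intervalIntegral.integral_congr fun θ hθ => ?_
    rw [Set.uIcc_of_le pi_pos.le] at hθ
    rw [hfF _ hθ.1 hθ.2]
  rw [e1, e2]
  have hI0 : 0 ≤ ∫ t in (0 : ℝ)..π, |F t| ^ p := intervalIntegral.integral_nonneg pi_pos.le
    fun t _ => by positivity
  have hpi := pi_pos
  calc _ ≤ ((1 + 4 * π) ^ p * ∫ t in (0 : ℝ)..π, |F t| ^ p) ^ (1 / p) :=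
        rpow_le_rpow (by positivity) h (by positivity)
    _ = _ := by
        rw [mul_rpow (by positivity) hI0, ← rpow_mul (by positivity),
          mul_one_div_cancel hp0.ne', rpow_one]

/-! Interpolation property. -/

lemma dirichlet (r : ℕ) (α : ℝ) :
    sin (α / 2) * ∑ s ∈ range (r + 1), (if s = 0 then 1 else 2) * cos (s * α) =
      sin ((r + 1 / 2) * α) := by
  induction r with
  | zero => simp; congr 1; ring
  | succ r ih =>
    rw [sum_range_succ, mul_add, ih]
    rw [if_neg (by omega)]
    push_cast
    have e1 : ((r : ℝ) + 1 / 2) * α = ((r + 1) * α) - α / 2 := by ring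
    have e2 : ((r : ℝ) + 1 + 1 / 2) * α = ((r + 1) * α) + α / 2 := by ring
    rw [e1, e2, sin_sub, sin_add]; ring

lemma dirichlet_pt (n : ℕ) (hn : 0 < n) (j : ℤ) (hj : ¬ (2 * (n : ℤ)) ∣ j) :
    ∑ s ∈ range n, (if s = 0 then 1 else 2) * cos (s * (j * π / n)) = - cos (j * π) := by
  have hn' : (n : ℝ) ≠ 0 := by positivity
  obtain ⟨r, rfl⟩ : ∃ r, n = r + 1 := ⟨n - 1, by omega⟩
  have h := dirichlet r (j * π / (r + 1 : ℕ))
  set α := j * π / (r + 1 : ℕ) with hα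
  have hs : sin (α / 2) ≠ 0 := by
    intro h0
    rw [sin_eq_zero_iff] at h0
    obtain ⟨c, hc⟩ := h0
    apply hj
    refine ⟨c, ?_⟩
    have hpi := pi_ne_zero
    rw [hα] at hc
    field_simp at hc
    have : (j : ℝ) = ((2 * (r + 1 : ℕ) * c : ℤ) : ℝ) := by push_cast at hc ⊢; linarith
    exact_mod_cast this
  have e : ((r : ℝ) + 1 / 2) * α = j * π - α / 2 := by
    rw [hα]; push_cast at hn' ⊢; field_simp; ring
  rw [e, sin_sub, sin_int_mul_pi] at h
  apply mul_left_cancel₀ hs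
  rw [h]; ring

lemma darboux_cos (r : ℕ) (θ φ : ℝ) (h0 : 0 ≤ θ) (h1 : θ ≤ π) (h2 : 0 ≤ φ) (h3 : φ ≤ π) :
    darboux r (cos θ) (cos φ) = 1 / π * ∑ s ∈ range (r + 1),
      (if s = 0 then 1 else 2) * (cos (s * θ) * cos (s * φ)) := by
  unfold darboux
  rw [mul_sum]
  refine sum_congr rfl fun s _ => ?_
  rw [chebP_cos s θ h0 h1, chebP_cos s φ h2 h3]
  have := cP_sq s
  calc _ = (cP s * cP s) * (cos (s * θ) * cos (s * φ)) := by ring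
    _ = _ := by rw [this]; split_ifs <;> ring

lemma darboux_node (n k h : ℕ) (hk : k ∈ Icc 1 n) (hh : h ∈ Icc 1 n) :
    darboux (n - 1) (chebNode n k) (chebNode n h) = if k = h then n / π else 0 := by
  have hk' := th_mem n k hk
  have hh' := th_mem n h hh
  rw [mem_Icc] at hk hh
  have hn : 0 < n := by omega
  have hn' : (n : ℝ) ≠ 0 := by positivity
  rw [node_eq, node_eq, darboux_cos _ _ _ hk'.1 hk'.2 hh'.1 hh'.2, Nat.sub_add_cancel hn]
  have hsum : ∑ s ∈ range n, (if s = 0 then (1 : ℝ) else 2) * (cos (s * th n k) * cos (s * th n h)) =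
      1 / 2 * (∑ s ∈ range n, (if s = 0 then (1 : ℝ) else 2) *
        cos (s * (((k : ℤ) - h : ℤ) * π / n)) + ∑ s ∈ range n, (if s = 0 then (1 : ℝ) else 2) *
        cos (s * (((k : ℤ) + h - 1 : ℤ) * π / n))) := by
    rw [← sum_add_distrib, mul_sum]
    refine sum_congr rfl fun s _ => ?_
    have e1 : (s : ℝ) * (((k : ℤ) - h : ℤ) * π / n) = s * th n k - s * th n h := by
      unfold th; push_cast; field_simp; ring
    have e2 : (s : ℝ) * (((k : ℤ) + h - 1 : ℤ) * π / n) = s * th n k + s * th n h := by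
      unfold th; push_cast; field_simp; ring
    rw [e1, e2, cos_sub, cos_add]; ring
  have nd : ¬ (2 * (n : ℤ)) ∣ (k : ℤ) + h - 1 := by
    intro hd
    have := Int.le_of_dvd (by omega) hd
    omega
  rw [hsum, dirichlet_pt n hn _ nd]
  split_ifs with hkh
  · subst hkh
    have e : ((k : ℤ) + k - 1 : ℤ) * π = (k : ℝ) * (2 * π) - π := by push_cast; ring
    rw [e, cos_sub_pi, cos_nat_mul_two_pi]
    have : ∑ s ∈ range n, (if s = 0 then (1 : ℝ) else 2) = 2 * n - 1 := by
      obtain ⟨r, rfl⟩ : ∃ r, n = r + 1 := ⟨n - 1, by omega⟩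
      rw [sum_range_succ']
      simp; ring
    simp [this]
    field_simp
  · have nd2 : ¬ (2 * (n : ℤ)) ∣ (k : ℤ) - h := by
      rintro ⟨c, hc⟩
      have h0 : c = 0 := by
        have h1 : c < 1 := by nlinarith
        have h2 : -1 < c := by nlinarith
        omega
      subst h0
      omega
    rw [dirichlet_pt n hn _ nd2]
    have e : ((k : ℤ) + h - 1 : ℤ) * π = ((k : ℤ) - h : ℤ) * π + (h : ℝ) * (2 * π) - π := by
      push_cast; ring
    rw [e, cos_sub_pi, cos_add_nat_mul_two_pi]
    ring

lemma cos_node_refl (n k j : ℕ) (hn : 0 < n) (hj : j ≤ n) :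
    cos ((n + j : ℕ) * th n k) = - cos ((n - j : ℕ) * th n k) := by
  have hn' : (n : ℝ) ≠ 0 := by positivity
  have h0 : cos (n * th n k) = 0 := by
    rw [cos_eq_zero_iff]
    refine ⟨(k : ℤ) - 1, ?_⟩
    unfold th; push_cast; field_simp; ring
  rw [Nat.cast_add, Nat.cast_sub hj, add_mul, sub_mul, cos_add, cos_sub, h0]
  ring

lemma chebP_node_refl (n k j : ℕ) (hk : k ∈ Icc 1 n) (hj : j < n) :
    chebP (n + j) (chebNode n k) = - chebP (n - j) (chebNode n k) := by
  have hk' := th_mem n k hk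
  rw [node_eq, chebP_cos _ _ hk'.1 hk'.2, chebP_cos _ _ hk'.1 hk'.2,
    cos_node_refl n k j (by omega) (by omega)]
  have : cP (n + j) = cP (n - j) := by
    unfold cP
    rw [if_neg (by omega), if_neg (by omega)]
  rw [this]; ring

lemma darboux_pair (n k h : ℕ) (hk : k ∈ Icc 1 n) (hh : h ∈ Icc 1 n) (i : ℕ) (hi : i < n) :
    darboux (n - 1 - i) (chebNode n k) (chebNode n h) +
      darboux (n + i) (chebNode n k) (chebNode n h) =
    2 * darboux (n - 1) (chebNode n k) (chebNode n h) := by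
  have step : ∀ r x y, darboux (r + 1) x y = darboux r x y + chebP (r + 1) x * chebP (r + 1) y :=
    fun r x y => sum_range_succ _ _
  induction i with
  | zero =>
    obtain ⟨r, rfl⟩ : ∃ r, n = r + 1 := ⟨n - 1, by omega⟩
    have h0 := chebP_node_refl (r + 1) k 0 hk (by omega)
    simp only [add_zero, Nat.sub_zero] at h0 ⊢
    have : chebP (r + 1) (chebNode (r + 1) k) = 0 := by linarith
    rw [step, this]; simp; ring
  | succ i ih =>
    have ih := ih (by omega)
    have e1 : n - 1 - i = n - 1 - (i + 1) + 1 := by omega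
    have e2 : n - 1 - (i + 1) + 1 = n - (i + 1) := by omega
    rw [e1, step, e2] at ih
    rw [← add_assoc, step, add_assoc n i 1, chebP_node_refl n k _ hk hi,
      chebP_node_refl n h _ hh hi]
    linarith

lemma vpK_node (n m k h : ℕ) (hm : 0 < m) (hmn : m < n) (hk : k ∈ Icc 1 n) (hh : h ∈ Icc 1 n) :
    vpK n m (chebNode n k) (chebNode n h) = if k = h then n / π else 0 := by
  rw [← darboux_node n k h hk hh]
  unfold vpK
  have hm' : (m : ℝ) ≠ 0 := by positivity
  have key : ∀ m, 0 < m → m < n → ∑ r ∈ Icc (n - m) (n + m - 1),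
      darboux r (chebNode n k) (chebNode n h) =
      2 * m * darboux (n - 1) (chebNode n k) (chebNode n h) := by
    intro m hm hmn
    induction m with
    | zero => omega
    | succ m ih =>
      have hp := darboux_pair n k h hk hh m (by omega)
      have e3 : n - (m + 1) = n - 1 - m := by omega
      rcases Nat.eq_zero_or_pos m with rfl | hm0
      · have : Icc (n - (0 + 1)) (n + (0 + 1) - 1) = {n - 1, n} := by
          ext r; simp; omega
        rw [this, sum_pair (by omega)]
        simpa using hp
      · have e : Icc (n - (m + 1)) (n + (m + 1) - 1) =
            insert (n - 1 - m) (insert (n + m) (Icc (n - m) (n + m - 1))) := by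
          ext r; simp; omega
        rw [e, sum_insert (by simp; omega), sum_insert (by simp; omega), ih hm0 (by omega)]
        push_cast
        linarith
  rw [key m hm hmn]
  field_simp

lemma lpNorm_eq (q : ℝ) (f : ℝ → ℝ) :
    _root_.lpNorm q f = (∫ θ in (0 : ℝ)..π, |f (cos θ)| ^ q) ^ (1 / q) := by
  unfold _root_.lpNorm
  rw [cov (fun x => |f x| ^ q)]

lemma vpOp_eq (n m : ℕ) (g : ℝ → ℝ) (x : ℝ) :
    vpOp n m g x = ∫ t in (0 : ℝ)..π, vpK n m x (cos t) * g (cos t) := by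
  unfold vpOp
  rw [cov (fun y => vpK n m x y * g y)]

lemma vpOp_expand (n m : ℕ) (hmn : m < n) (g : ℝ → ℝ) (hg : Continuous g) (x : ℝ) :
    vpOp n m g x = ∑ s ∈ range (2 * n),
      (kap n m s * ∫ t in (0 : ℝ)..π, chebP s (cos t) * g (cos t)) * chebP s x := by
  rw [vpOp_eq]
  have : ∀ t, vpK n m x (cos t) * g (cos t) = ∑ s ∈ range (2 * n),
      (kap n m s * chebP s x) * (chebP s (cos t) * g (cos t)) := by
    intro t
    rw [vpK_expand n m hmn, sum_mul]
    refine sum_congr rfl fun s _ => ?_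
    ring
  simp_rw [this]
  rw [intervalIntegral.integral_finsetSum
    (fun j _ => Continuous.intervalIntegrable (by fun_prop) _ _)]
  refine sum_congr rfl fun s _ => ?_
  rw [intervalIntegral.integral_const_mul]; ring

lemma vpOp_cont (n m : ℕ) (hmn : m < n) (g : ℝ → ℝ) (hg : Continuous g) :
    Continuous (vpOp n m g) := by
  rw [funext (vpOp_expand n m hmn g hg)]
  fun_prop

lemma vpOp_const_mul (n m : ℕ) (c : ℝ) (g : ℝ → ℝ) (x : ℝ) :
    vpOp n m (fun y => c * g y) x = c * vpOp n m g x := by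
  rw [vpOp_eq, vpOp_eq, ← intervalIntegral.integral_const_mul]
  refine intervalIntegral.integral_congr fun t _ => ?_
  ring

lemma scal_sum_expand (n m : ℕ) (hmn : m < n) (a : ℕ → ℝ) (x : ℝ) :
    ∑ k ∈ Icc 1 n, a k * scal n m k x = ∑ s ∈ range (2 * n),
      (∑ k ∈ Icc 1 n, a k * (π / n) * (kap n m s * chebP s (chebNode n k))) * chebP s x := by
  simp_rw [sum_mul]
  rw [sum_comm]
  refine sum_congr rfl fun k _ => ?_
  unfold scal
  rw [vpK_expand n m hmn, mul_sum, mul_sum]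
  refine sum_congr rfl fun s _ => ?_
  ring

lemma scal_sum_cont (n m : ℕ) (hmn : m < n) (a : ℕ → ℝ) :
    Continuous (fun x => ∑ k ∈ Icc 1 n, a k * scal n m k x) := by
  rw [funext (scal_sum_expand n m hmn a)]
  fun_prop

lemma scal_sum_node (n m : ℕ) (hm : 0 < m) (hmn : m < n) (a : ℕ → ℝ) (h : ℕ) (hh : h ∈ Icc 1 n) :
    ∑ k ∈ Icc 1 n, a k * scal n m k (chebNode n h) = a h := by
  have hn' : (n : ℝ) ≠ 0 := by have : 0 < n := by omega
                               positivity
  rw [sum_eq_single h]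
  · unfold scal
    rw [vpK_node n m h h hm hmn hh hh, if_pos rfl]
    field_simp
  · intro k hk hkh
    unfold scal
    rw [vpK_node n m k h hm hmn hk hh, if_neg hkh]; simp
  · exact fun h' => absurd hh h'

/-- Duality: pairing with `g`. -/
lemma pairing (n m : ℕ) (hmn : m < n) (a : ℕ → ℝ) (g : ℝ → ℝ) (hg : Continuous g) :
    (∫ t in (0 : ℝ)..π, (∑ k ∈ Icc 1 n, a k * scal n m k (cos t)) * g (cos t)) =
      π / n * ∑ k ∈ Icc 1 n, a k * vpOp n m g (chebNode n k) := by
  have hc : ∀ k, Continuous (fun t => vpK n m (chebNode n k) (cos t) * g (cos t)) := by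
    intro k
    have := funext (vpK_expand n m hmn (chebNode n k))
    have h2 : Continuous (vpK n m (chebNode n k)) := by
      rw [this]; fun_prop
    fun_prop
  have : ∀ t, (∑ k ∈ Icc 1 n, a k * scal n m k (cos t)) * g (cos t) =
      ∑ k ∈ Icc 1 n, (π / n * a k) * (vpK n m (chebNode n k) (cos t) * g (cos t)) := by
    intro t
    rw [sum_mul]
    refine sum_congr rfl fun k _ => ?_
    unfold scal; ring
  simp_rw [this]
  rw [intervalIntegral.integral_finsetSum
    (fun k _ => Continuous.intervalIntegrable (by have := hc k; fun_prop) _ _), mul_sum]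
  refine sum_congr rfl fun k _ => ?_
  rw [intervalIntegral.integral_const_mul, vpOp_eq]; ring

lemma abs_chebP_le (s : ℕ) (x : ℝ) : |chebP s x| ≤ 1 := by
  have h2 : √(2 / π) ≤ 1 := by
    rw [Real.sqrt_le_iff]; refine ⟨by norm_num, ?_⟩; rw [one_pow, div_le_one pi_pos]; linarith [pi_gt_three]
  have h1 : √(1 / π) ≤ 1 := by
    rw [Real.sqrt_le_iff]; refine ⟨by norm_num, ?_⟩; rw [one_pow, div_le_one pi_pos]; linarith [pi_gt_three]
  unfold chebP
  split_ifs
  · rwa [abs_of_nonneg (sqrt_nonneg _)]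
  · rw [abs_mul, abs_of_nonneg (sqrt_nonneg _)]
    exact mul_le_one₀ h2 (abs_nonneg _) (abs_cos_le_one _)

noncomputable def bK (n m : ℕ) : ℝ := ∑ s ∈ range (2 * n), |kap n m s|

lemma bK_nonneg (n m : ℕ) : 0 ≤ bK n m := sum_nonneg fun _ _ => abs_nonneg _

lemma abs_vpOp_le (n m : ℕ) (hmn : m < n) (g : ℝ → ℝ) (hg : Continuous g) (x : ℝ) :
    |vpOp n m g x| ≤ bK n m * ∫ t in (0 : ℝ)..π, |g (cos t)| := by
  rw [vpOp_expand n m hmn g hg]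
  refine (abs_sum_le_sum_abs _ _).trans ?_
  unfold bK
  rw [sum_mul]
  refine sum_le_sum fun s _ => ?_
  rw [abs_mul, abs_mul]
  have h1 : |∫ t in (0 : ℝ)..π, chebP s (cos t) * g (cos t)| ≤ ∫ t in (0 : ℝ)..π, |g (cos t)| := by
    refine (intervalIntegral.abs_integral_le_integral_abs pi_pos.le).trans ?_
    refine intervalIntegral.integral_mono (μ := volume) pi_pos.le
        (Continuous.intervalIntegrable (by fun_prop) _ _)
        (Continuous.intervalIntegrable (by fun_prop) _ _) fun t => ?_
    simp only [abs_mul]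
    exact mul_le_of_le_one_left (abs_nonneg _) (abs_chebP_le _ _)
  have h0 : 0 ≤ |kap n m s| * |∫ t in (0 : ℝ)..π, chebP s (cos t) * g (cos t)| := by positivity
  exact (mul_le_of_le_one_right h0 (abs_chebP_le _ _)).trans
    (mul_le_mul_of_nonneg_left h1 (abs_nonneg _))

lemma lpNorm_const_mul (q : ℝ) (hq : 1 ≤ q) (c : ℝ) (hc : 0 ≤ c) (f : ℝ → ℝ) :
    _root_.lpNorm q (fun x => c * f x) = c * _root_.lpNorm q f := by
  have hq0 : 0 < q := by linarith
  rw [lpNorm_eq, lpNorm_eq]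
  have : ∀ θ, |c * f (cos θ)| ^ q = c ^ q * |f (cos θ)| ^ q := by
    intro θ
    rw [abs_mul, abs_of_nonneg hc, mul_rpow hc (abs_nonneg _)]
  simp_rw [this]
  rw [intervalIntegral.integral_const_mul, mul_rpow (by positivity)
    (intervalIntegral.integral_nonneg pi_pos.le fun t _ => by positivity), ← rpow_mul hc,
    mul_one_div_cancel hq0.ne', rpow_one]

lemma lpNorm_nonneg' (q : ℝ) (f : ℝ → ℝ) : 0 ≤ _root_.lpNorm q f := by
  rw [lpNorm_eq]
  exact rpow_nonneg (intervalIntegral.integral_nonneg pi_pos.le fun t _ => by positivity) _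

lemma bddAbove_Lp (n m : ℕ) (hmn : m < n) (q : ℝ) (hq : 1 ≤ q) :
    BddAbove {a : ℝ | ∃ f : ℝ → ℝ, Continuous f ∧ _root_.lpNorm q f = 1 ∧
      a = _root_.lpNorm q (vpOp n m f)} := by
  have hq0 : 0 < q := by linarith
  refine ⟨(π * (bK n m * (π + 1)) ^ q) ^ (1 / q), ?_⟩
  rintro _ ⟨f, hf, hf1, rfl⟩
  have hfq : Continuous fun t => |f (cos t)| ^ q :=
    (hf.comp continuous_cos).abs.rpow_const fun _ => Or.inr hq0.le
  have hI0 : 0 ≤ ∫ θ in (0 : ℝ)..π, |f (cos θ)| ^ q :=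
    intervalIntegral.integral_nonneg pi_pos.le fun t _ => by positivity
  have hI : (∫ θ in (0 : ℝ)..π, |f (cos θ)| ^ q) = 1 := by
    rw [lpNorm_eq] at hf1
    have := congrArg (fun u : ℝ => u ^ q) hf1
    simpa [← rpow_mul hI0, hq0.ne'] using this
  have h1 : (∫ t in (0 : ℝ)..π, |f (cos t)|) ≤ π + 1 := by
    calc _ ≤ ∫ t in (0 : ℝ)..π, (1 + |f (cos t)| ^ q) := by
          refine intervalIntegral.integral_mono (μ := volume) pi_pos.le
            (Continuous.intervalIntegrable (by fun_prop) _ _)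
            (Continuous.intervalIntegrable (by fun_prop) _ _) fun t => ?_
          simp only
          rcases le_total (|f (cos t)|) 1 with h | h
          · have : 0 ≤ |f (cos t)| ^ q := by positivity
            linarith
          · have : |f (cos t)| ^ (1 : ℝ) ≤ |f (cos t)| ^ q := rpow_le_rpow_of_exponent_le h hq
            rw [rpow_one] at this
            linarith
      _ = π + 1 := by
          rw [intervalIntegral.integral_add (Continuous.intervalIntegrable (by fun_prop) _ _)
            (Continuous.intervalIntegrable (by fun_prop) _ _), hI]
          simp
  have hσ : ∀ x, |vpOp n m f x| ≤ bK n m * (π + 1) := fun x =>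
    (abs_vpOp_le n m hmn f hf x).trans (mul_le_mul_of_nonneg_left h1 (bK_nonneg n m))
  have hvc := vpOp_cont n m hmn f hf
  rw [lpNorm_eq]
  refine rpow_le_rpow (intervalIntegral.integral_nonneg pi_pos.le fun t _ => by positivity) ?_
    (by positivity)
  calc _ ≤ ∫ t in (0 : ℝ)..π, (bK n m * (π + 1)) ^ q := by
        refine intervalIntegral.integral_mono (μ := volume) pi_pos.le
          (Continuous.intervalIntegrable
            ((hvc.comp continuous_cos).abs.rpow_const fun _ => Or.inr hq0.le) _ _)
          (Continuous.intervalIntegrable (by fun_prop) _ _) fun t => ?_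
        exact rpow_le_rpow (abs_nonneg _) (hσ _) hq0.le
    _ = _ := by simp

lemma vpOp_Lp_le (n m : ℕ) (hmn : m < n) (q : ℝ) (hq : 1 ≤ q) (g : ℝ → ℝ) (hg : Continuous g)
    (hg0 : 0 < _root_.lpNorm q g) :
    _root_.lpNorm q (vpOp n m g) ≤ vpOpNormLp n m q * _root_.lpNorm q g := by
  set N := _root_.lpNorm q g with hN
  have h := le_csSup (bddAbove_Lp n m hmn q hq)
    ⟨fun y => N⁻¹ * g y, by fun_prop, by
      rw [lpNorm_const_mul q hq _ (by positivity), ← hN, inv_mul_cancel₀ hg0.ne'], rfl⟩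
  rw [funext (vpOp_const_mul n m N⁻¹ g), lpNorm_const_mul q hq _ (by positivity)] at h
  have h' : N⁻¹ * _root_.lpNorm q (vpOp n m g) ≤ vpOpNormLp n m q := h
  rwa [inv_mul_le_iff₀ hg0, mul_comm] at h'

lemma bdd_of_cont (f : ℝ → ℝ) (hf : Continuous f) :
    BddAbove (Set.range fun x : Set.Icc (-1 : ℝ) 1 => |f x|) := by
  have := (isCompact_range (X := Set.Icc (-1 : ℝ) 1)
    (f := fun x : Set.Icc (-1 : ℝ) 1 => |f x|) (by fun_prop)).bddAbove
  exact this

lemma le_supNorm (f : ℝ → ℝ) (hf : Continuous f) (x : ℝ) (hx : x ∈ Set.Icc (-1 : ℝ) 1) :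
    |f x| ≤ supNorm f := le_ciSup (bdd_of_cont f hf) ⟨x, hx⟩

lemma supNorm_le (f : ℝ → ℝ) (C : ℝ) (h : ∀ x ∈ Set.Icc (-1 : ℝ) 1, |f x| ≤ C) :
    supNorm f ≤ C := by
  have : Nonempty (Set.Icc (-1 : ℝ) 1) := ⟨⟨0, by norm_num⟩⟩
  exact ciSup_le fun x => h x x.2

lemma supNorm_nonneg (f : ℝ → ℝ) : 0 ≤ supNorm f := Real.iSup_nonneg fun _ => abs_nonneg _

lemma supNorm_const_mul (c : ℝ) (hc : 0 ≤ c) (f : ℝ → ℝ) :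
    supNorm (fun x => c * f x) = c * supNorm f := by
  unfold supNorm
  rw [Real.mul_iSup_of_nonneg hc]
  simp_rw [abs_mul, abs_of_nonneg hc]

lemma cos_mem (t : ℝ) : cos t ∈ Set.Icc (-1 : ℝ) 1 := ⟨neg_one_le_cos t, cos_le_one t⟩

lemma abs_vpOp_le_sup (n m : ℕ) (hmn : m < n) (g : ℝ → ℝ) (hg : Continuous g) (x : ℝ) :
    |vpOp n m g x| ≤ bK n m * (π * supNorm g) := by
  refine (abs_vpOp_le n m hmn g hg x).trans (mul_le_mul_of_nonneg_left ?_ (bK_nonneg n m))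
  calc _ ≤ ∫ t in (0 : ℝ)..π, supNorm g := by
        refine intervalIntegral.integral_mono (μ := volume) pi_pos.le
          (Continuous.intervalIntegrable (by fun_prop) _ _)
          (Continuous.intervalIntegrable (by fun_prop) _ _) fun t => ?_
        exact le_supNorm g hg _ (cos_mem t)
    _ = _ := by simp

lemma bddAbove_Sup (n m : ℕ) (hmn : m < n) :
    BddAbove {a : ℝ | ∃ f : ℝ → ℝ, Continuous f ∧ supNorm f = 1 ∧
      a = supNorm (vpOp n m f)} := by
  refine ⟨bK n m * (π * 1), ?_⟩
  rintro _ ⟨f, hf, hf1, rfl⟩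
  refine supNorm_le _ _ fun x _ => ?_
  rw [← hf1]
  exact abs_vpOp_le_sup n m hmn f hf x

lemma vpOpNormSup_nonneg (n m : ℕ) : 0 ≤ vpOpNormSup n m :=
  Real.sSup_nonneg (by rintro _ ⟨f, _, _, rfl⟩; exact supNorm_nonneg _)

lemma vpOpNormLp_nonneg (n m : ℕ) (q : ℝ) : 0 ≤ vpOpNormLp n m q :=
  Real.sSup_nonneg (by rintro _ ⟨f, _, _, rfl⟩; exact lpNorm_nonneg' _ _)

lemma vpOp_sup_le (n m : ℕ) (hmn : m < n) (g : ℝ → ℝ) (hg : Continuous g) (x : ℝ)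
    (hx : x ∈ Set.Icc (-1 : ℝ) 1) :
    |vpOp n m g x| ≤ vpOpNormSup n m * supNorm g := by
  rcases (supNorm_nonneg g).eq_or_lt with h0 | hg0
  · have := abs_vpOp_le_sup n m hmn g hg x
    rw [← h0] at this ⊢
    simpa using this
  set N := supNorm g with hN
  have h := le_csSup (bddAbove_Sup n m hmn)
    ⟨fun y => N⁻¹ * g y, by fun_prop, by
      rw [supNorm_const_mul _ (by positivity), ← hN, inv_mul_cancel₀ hg0.ne'], rfl⟩
  rw [funext (vpOp_const_mul n m N⁻¹ g), supNorm_const_mul _ (by positivity)] at h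
  have h' : N⁻¹ * supNorm (vpOp n m g) ≤ vpOpNormSup n m := h
  rw [inv_mul_le_iff₀ hg0, mul_comm] at h'
  exact (le_supNorm _ (vpOp_cont n m hmn g hg) x hx).trans h'

lemma upper_one (n m : ℕ) (hmn : m < n) (a : ℕ → ℝ) :
    (∫ t in (0 : ℝ)..π, |∑ k ∈ Icc 1 n, a k * scal n m k (cos t)|) ≤
      vpOpNormSup n m * (π / n * ∑ k ∈ Icc 1 n, |a k|) := by
  set f : ℝ → ℝ := fun x => ∑ k ∈ Icc 1 n, a k * scal n m k x with hf
  have hfc : Continuous f := scal_sum_cont n m hmn a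
  have hc0 := vpOpNormSup_nonneg n m
  have key : ∀ ε : ℝ, 0 < ε → (∫ t in (0 : ℝ)..π, |f (cos t)|) ≤
      vpOpNormSup n m * (π / n * ∑ k ∈ Icc 1 n, |a k|) + π * ε := by
    intro ε hε
    set g : ℝ → ℝ := fun x => f x / (|f x| + ε) with hgdef
    have hpos : ∀ x, 0 < |f x| + ε := fun x => by positivity
    have hg : Continuous g := hfc.div (by fun_prop) fun x => (hpos x).ne'
    have hg1 : ∀ x, |g x| ≤ 1 := by
      intro x
      simp only [hgdef]
      rw [abs_div, abs_of_pos (hpos x), div_le_one (hpos x)]; linarith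
    have hsup : supNorm g ≤ 1 := supNorm_le _ _ fun x _ => hg1 x
    have hpair := pairing n m hmn a g hg
    have hlow : (∫ t in (0 : ℝ)..π, |f (cos t)|) - π * ε ≤
        ∫ t in (0 : ℝ)..π, f (cos t) * g (cos t) := by
      have : (∫ t in (0 : ℝ)..π, (|f (cos t)| - ε)) = (∫ t in (0 : ℝ)..π, |f (cos t)|) - π * ε := by
        rw [intervalIntegral.integral_sub (Continuous.intervalIntegrable (by fun_prop) _ _)
            (Continuous.intervalIntegrable (by fun_prop) _ _)]
        simp
      rw [← this]
      refine intervalIntegral.integral_mono (μ := volume) pi_pos.le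
          (Continuous.intervalIntegrable (by fun_prop) _ _)
          (Continuous.intervalIntegrable (by fun_prop) _ _) fun t => ?_
      simp only [hgdef]
      rw [← mul_div_assoc, le_div_iff₀ (hpos _), ← abs_mul_abs_self (f (cos t))]
      nlinarith [sq_nonneg ε]
    have hup : π / n * ∑ k ∈ Icc 1 n, a k * vpOp n m g (chebNode n k) ≤
        vpOpNormSup n m * (π / n * ∑ k ∈ Icc 1 n, |a k|) := by
      rw [mul_left_comm, mul_sum (a := vpOpNormSup n m)]
      refine mul_le_mul_of_nonneg_left (sum_le_sum fun k _ => ?_) (by positivity)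
      refine (le_abs_self _).trans ?_
      rw [abs_mul, mul_comm]
      refine mul_le_mul_of_nonneg_right ?_ (abs_nonneg _)
      refine (vpOp_sup_le n m hmn g hg _ (cos_mem _)).trans ?_
      exact mul_le_of_le_one_right hc0 hsup
    have hpair' : (∫ t in (0 : ℝ)..π, f (cos t) * g (cos t)) =
      π / n * ∑ k ∈ Icc 1 n, a k * vpOp n m g (chebNode n k) := hpair
    linarith
  refine le_of_forall_pos_le_add fun δ hδ => ?_
  have := key (δ / π) (by positivity)
  rwa [mul_div_cancel₀ _ pi_ne_zero] at this

lemma upper_p (n m : ℕ) (hmn : m < n) (p : ℝ) (hp : 1 < p) (a : ℕ → ℝ) :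
    _root_.lpNorm p (fun x => ∑ k ∈ Icc 1 n, a k * scal n m k x) ≤
      vpOpNormLp n m (p / (p - 1)) * (1 + 4 * π) *
        (π / n * ∑ k ∈ Icc 1 n, |a k| ^ p) ^ (1 / p) := by
  have hn : 0 < n := by omega
  set q := p / (p - 1) with hqdef
  have hp1 : 0 < p - 1 := by linarith
  have hp0 : 0 < p := by linarith
  have hq : 1 < q := by rw [hqdef, one_lt_div hp1]; linarith
  have hq0 : 0 < q := by linarith
  have hpq : p.HolderConjugate q := Real.HolderConjugate.conjExponent hp
  set f : ℝ → ℝ := fun x => ∑ k ∈ Icc 1 n, a k * scal n m k x with hf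
  have hfc : Continuous f := scal_sum_cont n m hmn a
  have hc0 := vpOpNormLp_nonneg n m q
  set A := (π / n * ∑ k ∈ Icc 1 n, |a k| ^ p) ^ (1 / p) with hA
  have hs0 : 0 ≤ ∑ k ∈ Icc 1 n, |a k| ^ p := sum_nonneg fun _ _ => by positivity
  have hA0 : 0 ≤ A := by positivity
  set I := ∫ t in (0 : ℝ)..π, |f (cos t)| ^ p with hI
  have hI0 : 0 ≤ I := intervalIntegral.integral_nonneg pi_pos.le fun t _ => by positivity
  rw [lpNorm_eq, ← hI]
  rcases hI0.eq_or_lt with h0 | hIpos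
  · rw [← h0, zero_rpow (by positivity)]
    have := pi_pos
    positivity
  set g : ℝ → ℝ := fun x => max (f x) 0 ^ (p - 1) - max (-f x) 0 ^ (p - 1) with hgdef
  have hg : Continuous g := by
    refine Continuous.sub ?_ ?_
    · exact (hfc.max continuous_const).rpow_const fun _ => Or.inr hp1.le
    · exact (hfc.neg.max continuous_const).rpow_const fun _ => Or.inr hp1.le
  have hfg : ∀ x, f x * g x = |f x| ^ p := by
    intro x
    simp only [hgdef]
    rcases lt_trichotomy (f x) 0 with h | h | h
    · rw [max_eq_right h.le, max_eq_left (by linarith), zero_rpow hp1.ne', abs_of_neg h,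
        rpow_sub_one (by linarith)]
      have : f x ≠ 0 := h.ne
      field_simp
      ring
    · simp [h, zero_rpow hp0.ne']
    · rw [max_eq_left h.le, max_eq_right (by linarith), zero_rpow hp1.ne', abs_of_pos h,
        rpow_sub_one (by linarith)]
      field_simp
      ring
  have hgq : ∀ x, |g x| ^ q = |f x| ^ p := by
    intro x
    have hab : |g x| = |f x| ^ (p - 1) := by
      simp only [hgdef]
      rcases le_total (f x) 0 with h | h
      · rw [max_eq_right h, max_eq_left (by linarith), zero_rpow hp1.ne', abs_of_nonpos h,
          zero_sub, abs_neg, abs_of_nonneg (rpow_nonneg (by linarith) _)]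
      · rw [max_eq_left h, max_eq_right (by linarith), zero_rpow hp1.ne', abs_of_nonneg h,
          sub_zero, abs_of_nonneg (rpow_nonneg h _)]
    rw [hab, ← rpow_mul (abs_nonneg _), hqdef, mul_div_cancel₀ _ hp1.ne']
  have hgnorm : _root_.lpNorm q g = I ^ (1 / q) := by
    rw [lpNorm_eq, hI]
    simp_rw [hgq]
  have hpair : (∫ t in (0 : ℝ)..π, f (cos t) * g (cos t)) =
      π / n * ∑ k ∈ Icc 1 n, a k * vpOp n m g (chebNode n k) := pairing n m hmn a g hg
  simp_rw [hfg] at hpair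
  rw [← hI] at hpair
  have hm := marc_poly n hn _ (vpOp n m g) (vpOp_expand n m hmn g hg) q hq.le
  have hl := vpOp_Lp_le n m hmn q hq.le g hg (by rw [hgnorm]; positivity)
  rw [hgnorm] at hl
  set B := (π / n * ∑ k ∈ Icc 1 n, |vpOp n m g (chebNode n k)| ^ q) ^ (1 / q) with hB
  have hold : I ≤ A * B := by
    rw [hpair]
    have hh := Real.inner_le_Lp_mul_Lq (Icc 1 n) a (fun k => vpOp n m g (chebNode n k)) hpq
    have ht : 0 < π / n := by have := pi_pos; positivity
    have e : π / n = (π / n) ^ (1 / p) * (π / n) ^ (1 / q) := by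
      rw [← rpow_add ht]
      have := hpq.inv_add_inv_eq_one
      rw [one_div, one_div, this, rpow_one]
    rw [hA, hB, mul_rpow ht.le hs0,
      mul_rpow ht.le (sum_nonneg fun _ _ => by positivity)]
    refine (mul_le_mul_of_nonneg_left hh ht.le).trans (le_of_eq ?_)
    nth_rewrite 1 [e]
    ring
  have hpi := pi_pos
  have hfin : I ≤ (vpOpNormLp n m q * (1 + 4 * π) * A) * I ^ (1 / q) := by
    calc I ≤ A * B := hold
      _ ≤ A * ((1 + 4 * π) * (vpOpNormLp n m q * I ^ (1 / q))) := by
          gcongr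
          exact hm.trans (by gcongr)
      _ = _ := by ring
  have eI : I = I ^ (1 / p) * I ^ (1 / q) := by
    rw [← rpow_add hIpos]
    have := hpq.inv_add_inv_eq_one
    rw [one_div, one_div, this, rpow_one]
  nth_rewrite 1 [eI] at hfin
  exact le_of_mul_le_mul_right hfin (by positivity)

end VPR

theorem scal_Lp_riesz_bounds (n m : ℕ) (hm : 0 < m) (hmn : m < n)
    (p : ℝ) (hp : 1 ≤ p) (a : ℕ → ℝ) :
    (1 / (1 + 4 * Real.pi)) *
        ((Real.pi / (n : ℝ) * ∑ k ∈ Finset.Icc 1 n, |a k| ^ p) ^ (1 / p)) ≤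
      lpNorm p (fun x => ∑ k ∈ Finset.Icc 1 n, a k * scal n m k x) ∧
    lpNorm p (fun x => ∑ k ∈ Finset.Icc 1 n, a k * scal n m k x) ≤
      (if p = 1 then vpOpNormSup n m else vpOpNormLp n m (p / (p - 1))) *
        (1 + 4 * Real.pi) *
        ((Real.pi / (n : ℝ) * ∑ k ∈ Finset.Icc 1 n, |a k| ^ p) ^ (1 / p)) := by
  have hn : 0 < n := by omega
  have hpi := Real.pi_pos
  constructor
  · have h := VPR.marc_poly n hn _ (fun x => ∑ k ∈ Finset.Icc 1 n, a k * scal n m k x)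
      (VPR.scal_sum_expand n m hmn a) p hp
    have e : ∑ k ∈ Finset.Icc 1 n,
        |(fun x => ∑ k ∈ Finset.Icc 1 n, a k * scal n m k x) (chebNode n k)| ^ p =
        ∑ k ∈ Finset.Icc 1 n, |a k| ^ p := by
      refine Finset.sum_congr rfl fun k hk => ?_
      simp only
      rw [VPR.scal_sum_node n m hm hmn a k hk]
    rw [e] at h
    rw [one_div, inv_mul_le_iff₀ (by positivity)]
    exact h
  · split_ifs with hp1
    · subst hp1
      have h := VPR.upper_one n m hmn a
      rw [VPR.lpNorm_eq]
      simp only [Real.rpow_one, div_one]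
      have hc := VPR.vpOpNormSup_nonneg n m
      have hs : 0 ≤ Real.pi / n * ∑ k ∈ Finset.Icc 1 n, |a k| :=
        mul_nonneg (by positivity) (Finset.sum_nonneg fun _ _ => abs_nonneg _)
      refine h.trans ?_
      have := mul_nonneg hc hs
      nlinarith [mul_nonneg this hpi.le]
    · exact VPR.upper_p n m hmn p (lt_of_le_of_ne hp (Ne.symm hp1)) a
end
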